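/- For every r ∈ (1,2), with ε = (r−1)/4, there is a constant C > 0 such that for every integer y ≥ 1 there is an integer N_{r,y} with: for all b with gcd(b,y) = 1, every finite set F ⊂ ℤ, and every real 0 < λ < 1, setting N₀ = max(N_{r,y}, 2^{λ^{1−r}}), one has #{ x ∈ ℤ : sup_{N = 2^n > N₀} A_{N,y,b} 1_F(x) > λ } ≤ C · λ^{−r−ε} · |F|, where the supremum is over dyadic integers N = 2^n exceeding N₀. -/

import Mathlib

open scoped ENNReal Classical

noncomputable section

/-- The prime-progression average `A_{N,y,b} f`. -/
def pavg (N y : ℕ) (b : ℤ) (f : ℤ → ℝ) (x : ℤ) : ℝ :=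
  (Nat.totient y : ℝ) / (N : ℝ) *
    ∑ n ∈ (Finset.range N).filter (fun n : ℕ => (n : ℤ) % (y : ℤ) = b % (y : ℤ)),
      ArithmeticFunction.vonMangoldt n * f (x - n)

/-!
Selberg's sieve majorizes the von Mangoldt function on a progression modulo `y`, up to prime
powers, by a combination of the Ramanujan sums `c_q` with `q` squarefree, coprime to `y` and at
most `2 ^ (n / 20)` for averages of length `2 ^ n`. As `c_q` is a combination of the indicators of
the multiples of the divisors of `q`, the average twisted by `c_q` is dominated by shifted
Hardy–Littlewood maximal functions.

Split the moduli at a height `Z` of order `λ ^ (-2)`. For `q ≤ Z` the `ℓ ^ p` maximal inequality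
with `p = √r` loses only `Z ^ ((p - 1) / 2)`, because the coefficients of `c_q` add up to a small
power of `Z`, and Chebyshev's inequality gives `λ ^ (-p ^ 2) = λ ^ (-r)`. For `q > Z` the twisted
average hardly changes when `f` is replaced by its projection onto the frequencies with
denominator `q`; these projections are almost orthogonal, so the `ℓ²` maximal inequality gains
`Z ^ (-1 / 4)`, which turns the factor `λ ^ (-2)` of Chebyshev's inequality into `λ ^ (-1)`. The
errors of these replacements are summable over `n`, with sum at most `‖f‖₁` once `n` is large in
terms of `y`.

All of this is done on a finite abelian group and transferred to `ℤ` through `ZMod M` for large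
`M`.
-/

/-! ### Squarefree moduli and their Ramanujan sums -/

lemma sum_le_sum_of_injOn {ι κ M : Type*} [AddCommMonoid M] [PartialOrder M]
    [IsOrderedAddMonoid M] {s : Finset ι} {t : Finset κ} {f : ι → M} {g : κ → M} (e : ι → κ)
    (hmaps : Set.MapsTo e s t) (hinj : Set.InjOn e s) (hfg : ∀ i ∈ s, f i ≤ g (e i))
    (hg : ∀ k ∈ t, 0 ≤ g k) : ∑ i ∈ s, f i ≤ ∑ k ∈ t, g k :=
  calc ∑ i ∈ s, f i ≤ ∑ i ∈ s, g (e i) := Finset.sum_le_sum hfg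
    _ = ∑ k ∈ s.image e, g k := (Finset.sum_image hinj).symm
    _ ≤ ∑ k ∈ t, g k := Finset.sum_le_sum_of_subset_of_nonneg
        (Finset.image_subset_iff.2 hmaps) fun k hk _ => hg k hk

section Moduli

/-- The squarefree modulus with prime factors `S`; squarefree moduli are indexed by their sets of
prime factors throughout. -/
def modulus (S : Finset ℕ) : ℕ := ∏ p ∈ S, p

/-- Euler's function of the squarefree modulus with prime factors `S`, as a real number. -/
def modulusTotient (S : Finset ℕ) : ℝ := ∏ p ∈ S, ((p : ℝ) - 1)

/-- The set `S` consists of primes not dividing `y`, so that `modulus S` is coprime to `y`. -/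
def SiftingSet (y : ℕ) (S : Finset ℕ) : Prop := ∀ p ∈ S, p.Prime ∧ ¬ p ∣ y

/-- The Ramanujan sum `c_q(n)` with `q = modulus S`, in product form. -/
def ramanujan (S : Finset ℕ) (n : ℤ) : ℝ := ∏ p ∈ S, if (p : ℤ) ∣ n then (p : ℝ) - 1 else -1

/-- The squarefree moduli coprime to `y` and at most `D`. -/
def siftingSets (y D : ℕ) : Finset (Finset ℕ) :=
  {S ∈ (Finset.range (D + 1)).powerset | SiftingSet y S ∧ modulus S ≤ D}

variable {y D : ℕ} {S T : Finset ℕ}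

lemma SiftingSet.prime (hS : SiftingSet y S) : ∀ p ∈ S, p.Prime := fun p hp => (hS p hp).1

lemma SiftingSet.mono (hT : SiftingSet y T) (h : S ⊆ T) : SiftingSet y S :=
  fun p hp => hT p (h hp)

lemma SiftingSet.union (hS : SiftingSet y S) (hT : SiftingSet y T) : SiftingSet y (S ∪ T) :=
  fun p hp => (Finset.mem_union.1 hp).elim (hS p) (hT p)

lemma modulus_pos (hS : ∀ p ∈ S, p.Prime) : 0 < modulus S :=
  Finset.prod_pos fun p hp => (hS p hp).pos

lemma modulus_mono (hT : ∀ p ∈ T, p.Prime) (h : S ⊆ T) : modulus S ≤ modulus T :=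
  Finset.prod_le_prod_of_subset_of_one_le' h fun p hp _ => (hT p hp).one_le

lemma dvd_modulus {p : ℕ} (hp : p ∈ S) : p ∣ modulus S :=
  Finset.dvd_prod_of_mem (fun p => p) hp

lemma le_modulus (hS : ∀ p ∈ S, p.Prime) {p : ℕ} (hp : p ∈ S) : p ≤ modulus S :=
  Nat.le_of_dvd (modulus_pos hS) (dvd_modulus hp)

lemma two_pow_card_le_modulus (hS : ∀ p ∈ S, p.Prime) : 2 ^ S.card ≤ modulus S :=
  Finset.pow_card_le_prod _ _ _ fun p hp => (hS p hp).two_le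

lemma modulus_union_le (hS : ∀ p ∈ S, p.Prime) :
    modulus (S ∪ T) ≤ modulus S * modulus T := by
  unfold modulus
  rw [← Finset.prod_union_inter]
  exact Nat.le_mul_of_pos_right _
    (modulus_pos fun p hp => hS p (Finset.mem_inter.1 hp).1)

lemma modulus_injOn : Set.InjOn modulus {S | ∀ p ∈ S, p.Prime} := fun S hS T hT h => by
  rw [← Nat.primeFactors_prod hS, ← Nat.primeFactors_prod hT]
  exact congrArg Nat.primeFactors h

lemma modulus_intCast_dvd_iff (hS : ∀ p ∈ S, p.Prime) {n : ℤ} :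
    (modulus S : ℤ) ∣ n ↔ ∀ p ∈ S, (p : ℤ) ∣ n := by
  rw [modulus, Nat.cast_prod]
  refine ⟨fun h p hp => (Finset.dvd_prod_of_mem (fun p : ℕ => (p : ℤ)) hp).trans h,
    Finset.prod_dvd_of_coprime fun p hp q hq hpq => ?_⟩
  exact Nat.isCoprime_iff_coprime.2 ((Nat.coprime_primes (hS p hp) (hS q hq)).2 hpq)

lemma SiftingSet.coprime_modulus (hS : SiftingSet y S) : Nat.Coprime y (modulus S) :=
  Nat.Coprime.prod_right fun p hp => ((hS p hp).1.coprime_iff_not_dvd.2 (hS p hp).2).symm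

lemma mem_siftingSets : S ∈ siftingSets y D ↔ SiftingSet y S ∧ modulus S ≤ D := by
  rw [siftingSets, Finset.mem_filter, Finset.mem_powerset, and_iff_right_iff_imp]
  exact fun h p hp => Finset.mem_range_succ_iff.2 ((le_modulus h.1.prime hp).trans h.2)

lemma siftingSets_mono {D' : ℕ} (h : D ≤ D') : siftingSets y D ⊆ siftingSets y D' := fun S hS => by
  rw [mem_siftingSets] at hS ⊢
  exact hS.imp_right h.trans'

lemma card_siftingSets_le (y D : ℕ) : (siftingSets y D).card ≤ D := by
  have h : Set.MapsTo modulus (siftingSets y D) (Finset.Icc 1 D) := fun S hS => by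
    obtain ⟨hS, hD⟩ := mem_siftingSets.1 hS
    exact Finset.mem_coe.2 (Finset.mem_Icc.2 ⟨modulus_pos hS.prime, hD⟩)
  simpa using Finset.card_le_card_of_injOn modulus h
    (modulus_injOn.mono fun S hS => (mem_siftingSets.1 hS).1.prime)

lemma natCast_sub_one_pos {p : ℕ} (hp : p.Prime) : (0 : ℝ) < p - 1 :=
  sub_pos.2 (Nat.one_lt_cast.2 hp.one_lt)

lemma modulusTotient_pos (hS : ∀ p ∈ S, p.Prime) : 0 < modulusTotient S :=
  Finset.prod_pos fun p hp => natCast_sub_one_pos (hS p hp)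

lemma modulusTotient_union (h : Disjoint S T) :
    modulusTotient (S ∪ T) = modulusTotient S * modulusTotient T := Finset.prod_union h

lemma modulusTotient_inter_mul_sdiff (S T : Finset ℕ) :
    modulusTotient (S ∩ T) * modulusTotient (S \ T) = modulusTotient S :=
  Finset.prod_inter_mul_prod_sdiff S T _

lemma modulusTotient_le_modulus (hS : ∀ p ∈ S, p.Prime) : modulusTotient S ≤ modulus S := by
  rw [modulus, Nat.cast_prod]
  exact Finset.prod_le_prod (fun p hp => (natCast_sub_one_pos (hS p hp)).le)
    fun p _ => (sub_one_lt _).le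

lemma modulus_le_two_pow_mul_modulusTotient (hS : ∀ p ∈ S, p.Prime) :
    (modulus S : ℝ) ≤ 2 ^ S.card * modulusTotient S := by
  rw [modulus, modulusTotient, Nat.cast_prod, ← Finset.prod_const, ← Finset.prod_mul_distrib]
  refine Finset.prod_le_prod (fun _ _ => by positivity) fun p hp => ?_
  have : (2 : ℝ) ≤ p := by exact_mod_cast (hS p hp).two_le
  linarith

lemma ramanujan_union (h : Disjoint S T) (n : ℤ) :
    ramanujan (S ∪ T) n = ramanujan S n * ramanujan T n := Finset.prod_union h

lemma ramanujan_inter_mul_sdiff (S T : Finset ℕ) (n : ℤ) :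
    ramanujan (S ∩ T) n * ramanujan (S \ T) n = ramanujan S n :=
  Finset.prod_inter_mul_prod_sdiff S T _

lemma abs_ramanujan_le_sum (hS : ∀ p ∈ S, p.Prime) (n : ℤ) :
    |ramanujan S n| ≤ ∑ T ∈ S.powerset, if (modulus T : ℤ) ∣ n then (modulus T : ℝ) else 0 := by
  have hfactor : |ramanujan S n| ≤ ∏ p ∈ S, ((if (p : ℤ) ∣ n then (p : ℝ) else 0) + 1) := by
    rw [ramanujan, Finset.abs_prod]
    refine Finset.prod_le_prod (fun _ _ => abs_nonneg _) fun p hp => ?_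
    have := natCast_sub_one_pos (hS p hp)
    split_ifs
    · rw [abs_of_pos this]; linarith
    · simp
  refine hfactor.trans_eq ((Finset.prod_add_one S).trans (Finset.sum_congr rfl fun T hT => ?_))
  have hTp : ∀ p ∈ T, p.Prime := fun p hp => hS p (Finset.mem_powerset.1 hT hp)
  simp only [Finset.prod_ite_zero, modulus_intCast_dvd_iff hTp]
  rw [modulus, Nat.cast_prod]

lemma abs_ramanujan_le (hS : ∀ p ∈ S, p.Prime) (n : ℤ) : |ramanujan S n| ≤ modulus S := by
  rw [ramanujan, Finset.abs_prod, modulus, Nat.cast_prod]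
  refine Finset.prod_le_prod (fun _ _ => abs_nonneg _) fun p hp => ?_
  have := natCast_sub_one_pos (hS p hp)
  split_ifs
  · rw [abs_of_pos this]; linarith
  · rw [abs_neg, abs_one]; linarith

end Moduli


/-! ### Selberg's sieve weight -/

section SelbergWeight

/-- Selberg's normalising sum `G(y, D) = ∑ 1 / φ(q)` over the squarefree `q ≤ D` coprime to `y`. -/
def selbergMass (y D : ℕ) : ℝ := ∑ S ∈ siftingSets y D, 1 / modulusTotient S

/-- Selberg's sum `∑ μ(q) c_q(n) / φ(q)` over the squarefree `q ≤ D` coprime to `y`: at integers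
without prime factors up to `D` it takes the constant value `selbergMass y D`. -/
def selbergSum (y D : ℕ) (n : ℤ) : ℝ :=
  ∑ S ∈ siftingSets y D, (-1) ^ S.card / modulusTotient S * ramanujan S n

/-- The coefficient of `ramanujan E` in the square of `ramanujan I`. -/
def squareCoeff (I E : Finset ℕ) : ℝ := (∏ p ∈ E, ((p : ℝ) - 2)) * modulusTotient (I \ E)

/-- Index set for the expansion of `selbergSum y D ^ 2`: a pair of moduli `A`, `B` of the sum and a
part `E` of their intersection. -/
def selbergSqIndex (y D : ℕ) : Finset (Σ _ : Finset ℕ × Finset ℕ, Finset ℕ) :=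
  (siftingSets y D ×ˢ siftingSets y D).sigma fun P => (P.1 ∩ P.2).powerset

/-- The modulus of the Ramanujan sum in the term of `selbergSum y D ^ 2` indexed by `t`. -/
def selbergSqModulus (t : Σ _ : Finset ℕ × Finset ℕ, Finset ℕ) : Finset ℕ :=
  symmDiff t.1.1 t.1.2 ∪ t.2

/-- The coefficient of the term of `selbergSum y D ^ 2` indexed by `t`. -/
def selbergSqTerm (t : Σ _ : Finset ℕ × Finset ℕ, Finset ℕ) : ℝ :=
  (-1) ^ t.1.1.card / modulusTotient t.1.1 * ((-1) ^ t.1.2.card / modulusTotient t.1.2) *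
    squareCoeff (t.1.1 ∩ t.1.2) t.2

/-- The coefficient of `ramanujan Q` in `selbergSum y D ^ 2`. -/
def selbergSqCoeff (y D : ℕ) (Q : Finset ℕ) : ℝ :=
  ∑ t ∈ selbergSqIndex y D with selbergSqModulus t = Q, selbergSqTerm t

variable {y D : ℕ} {t : Σ _ : Finset ℕ × Finset ℕ, Finset ℕ}

lemma selbergSum_eq_selbergMass {n : ℤ} (hn : ∀ p : ℕ, p.Prime → p ≤ D → ¬ (p : ℤ) ∣ n) :
    selbergSum y D n = selbergMass y D := Finset.sum_congr rfl fun S hS => by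
  obtain ⟨hS, hD⟩ := mem_siftingSets.1 hS
  have hram : ramanujan S n = (-1) ^ S.card := by
    rw [ramanujan, ← Finset.prod_const]
    exact Finset.prod_congr rfl fun p hp =>
      if_neg (hn p (hS.prime p hp) ((le_modulus hS.prime hp).trans hD))
  rw [hram, div_mul_eq_mul_div, ← mul_pow, neg_mul_neg, one_mul, one_pow]

lemma selbergMass_pos (y : ℕ) (hD : 1 ≤ D) : 0 < selbergMass y D := by
  refine Finset.sum_pos (fun S hS => ?_) ⟨∅, mem_siftingSets.2 ⟨by simp [SiftingSet], hD⟩⟩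
  exact one_div_pos.2 (modulusTotient_pos (mem_siftingSets.1 hS).1.prime)

lemma ramanujan_sq (I : Finset ℕ) (n : ℤ) :
    ramanujan I n ^ 2 = ∑ E ∈ I.powerset, squareCoeff I E * ramanujan E n := by
  have hprime (p : ℕ) : (if (p : ℤ) ∣ n then (p : ℝ) - 1 else -1) ^ 2 =
      ((p : ℝ) - 2) * (if (p : ℤ) ∣ n then (p : ℝ) - 1 else -1) + ((p : ℝ) - 1) := by
    split_ifs <;> ring
  rw [ramanujan, ← Finset.prod_pow, Finset.prod_congr rfl fun p _ => hprime p, Finset.prod_add]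
  refine Finset.sum_congr rfl fun E _ => ?_
  rw [Finset.prod_mul_distrib, squareCoeff, ramanujan, modulusTotient]
  ring

lemma ramanujan_mul (A B : Finset ℕ) (n : ℤ) :
    ramanujan A n * ramanujan B n = ∑ E ∈ (A ∩ B).powerset,
      squareCoeff (A ∩ B) E * ramanujan (symmDiff A B ∪ E) n := by
  have hsymm : ramanujan (symmDiff A B) n = ramanujan (A \ B) n * ramanujan (B \ A) n :=
    ramanujan_union disjoint_sdiff_sdiff n
  calc ramanujan A n * ramanujan B n
      = ramanujan (symmDiff A B) n * ramanujan (A ∩ B) n ^ 2 := by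
        rw [hsymm, ← ramanujan_inter_mul_sdiff A B, ← ramanujan_inter_mul_sdiff B A,
          Finset.inter_comm B A]
        ring
    _ = _ := by
        rw [ramanujan_sq, Finset.mul_sum]
        refine Finset.sum_congr rfl fun E hE => ?_
        have hdisj : Disjoint (symmDiff A B) E :=
          (disjoint_symmDiff_inf A B).mono_right (Finset.mem_powerset.1 hE)
        rw [ramanujan_union hdisj]
        ring

lemma mem_selbergSqIndex : t ∈ selbergSqIndex y D ↔
    (t.1.1 ∈ siftingSets y D ∧ t.1.2 ∈ siftingSets y D) ∧ t.2 ⊆ t.1.1 ∩ t.1.2 := by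
  rw [selbergSqIndex, Finset.mem_sigma, Finset.mem_product, Finset.mem_powerset]

lemma selbergSqModulus_union_sdiff (ht : t.2 ⊆ t.1.1 ∩ t.1.2) :
    selbergSqModulus t ∪ t.1.1 \ selbergSqModulus t = t.1.1 ∪ t.1.2 := by
  grind [selbergSqModulus, Finset.mem_symmDiff]

lemma selbergSqModulus_mem_siftingSets (ht : t ∈ selbergSqIndex y D) :
    selbergSqModulus t ∈ siftingSets y (D * D) := by
  obtain ⟨⟨hA, hB⟩, hE⟩ := mem_selbergSqIndex.1 ht
  rw [mem_siftingSets] at hA hB ⊢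
  have hsub : selbergSqModulus t ⊆ t.1.1 ∪ t.1.2 :=
    selbergSqModulus_union_sdiff hE ▸ Finset.subset_union_left
  have hAB := hA.1.union hB.1
  exact ⟨hAB.mono hsub, (modulus_mono hAB.prime hsub).trans
    ((modulus_union_le hA.1.prime).trans (Nat.mul_le_mul hA.2 hB.2))⟩

lemma selbergSum_sq (y D : ℕ) (n : ℤ) :
    selbergSum y D n ^ 2 =
      ∑ Q ∈ siftingSets y (D * D), selbergSqCoeff y D Q * ramanujan Q n := by
  calc selbergSum y D n ^ 2
      = ∑ t ∈ selbergSqIndex y D, selbergSqTerm t * ramanujan (selbergSqModulus t) n := by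
        rw [selbergSqIndex, Finset.sum_sigma, sq, selbergSum, Finset.sum_mul_sum,
          Finset.sum_product]
        refine Finset.sum_congr rfl fun A _ => Finset.sum_congr rfl fun B _ => ?_
        rw [mul_mul_mul_comm, ramanujan_mul, Finset.mul_sum]
        exact Finset.sum_congr rfl fun E _ => (mul_assoc _ _ _).symm
    _ = _ := by
        rw [← Finset.sum_fiberwise_of_maps_to fun t ht => selbergSqModulus_mem_siftingSets ht]
        refine Finset.sum_congr rfl fun Q _ => ?_
        rw [selbergSqCoeff, Finset.sum_mul]
        exact Finset.sum_congr rfl fun t ht => by rw [(Finset.mem_filter.1 ht).2]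

lemma abs_squareCoeff_le {I E : Finset ℕ} (hI : ∀ p ∈ I, p.Prime) (hE : E ⊆ I) :
    |squareCoeff I E| ≤ modulusTotient I := by
  have hprod : |∏ p ∈ E, ((p : ℝ) - 2)| ≤ modulusTotient E := by
    rw [Finset.abs_prod]
    refine Finset.prod_le_prod (fun _ _ => abs_nonneg _) fun p hp => ?_
    have : (2 : ℝ) ≤ p := by exact_mod_cast (hI p (hE hp)).two_le
    rw [abs_of_nonneg (by linarith)]
    linarith
  have hdiff : 0 < modulusTotient (I \ E) :=
    modulusTotient_pos fun p hp => hI p (Finset.mem_sdiff.1 hp).1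
  rw [squareCoeff, abs_mul, abs_of_pos hdiff, ← modulusTotient_inter_mul_sdiff I E,
    Finset.inter_eq_right.2 hE]
  gcongr

/-- The point is `φ(A) φ(B) = φ(A ∪ B) φ(A ∩ B)`, where `A ∪ B` is the disjoint union of the
resulting modulus and its complement in `A`. -/
lemma abs_selbergSqTerm_le (ht : t ∈ selbergSqIndex y D) :
    |selbergSqTerm t| ≤ 1 / modulusTotient (selbergSqModulus t) *
      (1 / modulusTotient (t.1.1 \ selbergSqModulus t)) := by
  obtain ⟨⟨hA, hB⟩, hE⟩ := mem_selbergSqIndex.1 ht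
  replace hA := (mem_siftingSets.1 hA).1
  replace hB := (mem_siftingSets.1 hB).1
  have hφA := modulusTotient_pos hA.prime
  have hφB := modulusTotient_pos hB.prime
  have hI := (hA.mono Finset.inter_subset_left : SiftingSet y (t.1.1 ∩ t.1.2)).prime
  have hφI := modulusTotient_pos hI
  have hprod : modulusTotient t.1.1 * modulusTotient t.1.2 =
      modulusTotient (t.1.1 ∪ t.1.2) * modulusTotient (t.1.1 ∩ t.1.2) :=
    (Finset.prod_union_inter).symm
  rw [selbergSqTerm, abs_mul, abs_mul, abs_div, abs_div, abs_neg_one_pow, abs_neg_one_pow,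
    abs_of_pos hφA, abs_of_pos hφB, one_div_mul_one_div, one_div_mul_one_div,
    ← modulusTotient_union Finset.disjoint_sdiff, selbergSqModulus_union_sdiff hE, hprod]
  calc 1 / (modulusTotient (t.1.1 ∪ t.1.2) * modulusTotient (t.1.1 ∩ t.1.2)) *
        |squareCoeff (t.1.1 ∩ t.1.2) t.2|
      ≤ 1 / (modulusTotient (t.1.1 ∪ t.1.2) * modulusTotient (t.1.1 ∩ t.1.2)) *
        modulusTotient (t.1.1 ∩ t.1.2) := by
        rw [← hprod]
        gcongr
        exact abs_squareCoeff_le hI hE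
    _ = _ := by field_simp

lemma eq_union_of_symmDiff_union_eq {A B E Q : Finset ℕ} (hE : E ⊆ A ∩ B)
    (hQ : symmDiff A B ∪ E = Q) :
    A = A ∩ Q ∪ A \ Q ∧ B = B ∩ Q ∪ A \ Q ∧ E = A ∩ Q ∩ (B ∩ Q) := by
  grind [Finset.mem_symmDiff]

lemma injOn_selbergSqIndex (y D : ℕ) (Q : Finset ℕ) :
    Set.InjOn (fun t : Σ _ : Finset ℕ × Finset ℕ, Finset ℕ => (t.1.1 ∩ Q, t.1.2 ∩ Q, t.1.1 \ Q))
      ((selbergSqIndex y D).filter fun t => selbergSqModulus t = Q) := by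
  rintro ⟨⟨A, B⟩, E⟩ ht ⟨⟨A', B'⟩, E'⟩ ht' h
  obtain ⟨ht, hQ⟩ := Finset.mem_filter.1 ht
  obtain ⟨ht', hQ'⟩ := Finset.mem_filter.1 ht'
  obtain ⟨hA, hB, hE⟩ := eq_union_of_symmDiff_union_eq (mem_selbergSqIndex.1 ht).2 hQ
  obtain ⟨hA', hB', hE'⟩ := eq_union_of_symmDiff_union_eq (mem_selbergSqIndex.1 ht').2 hQ'
  simp only [Prod.mk.injEq] at h hA hB hE hA' hB' hE'
  obtain ⟨hAQ, hBQ, hAQ'⟩ := h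
  rw [hAQ, hAQ', ← hA'] at hA
  rw [hBQ, hAQ', ← hB'] at hB
  rw [hAQ, hBQ, ← hE'] at hE
  rw [hA, hB, hE]

lemma abs_selbergSqCoeff_le (y D : ℕ) {Q : Finset ℕ} (hQ : ∀ p ∈ Q, p.Prime) :
    |selbergSqCoeff y D Q| ≤ 4 ^ Q.card / modulusTotient Q * selbergMass y D := by
  have hφ := modulusTotient_pos hQ
  calc |selbergSqCoeff y D Q|
      ≤ ∑ t ∈ selbergSqIndex y D with selbergSqModulus t = Q, |selbergSqTerm t| :=
        Finset.abs_sum_le_sum_abs _ _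
    _ ≤ ∑ t ∈ Q.powerset ×ˢ Q.powerset ×ˢ siftingSets y D,
          1 / modulusTotient Q * (1 / modulusTotient t.2.2) := by
        refine sum_le_sum_of_injOn _ (fun t ht => ?_) (injOn_selbergSqIndex y D Q)
          (fun t ht => ?_) fun t ht => ?_
        · obtain ⟨ht, -⟩ := Finset.mem_filter.1 ht
          obtain ⟨hA, hD⟩ := mem_siftingSets.1 (mem_selbergSqIndex.1 ht).1.1
          simp only [Finset.coe_product, Set.mem_prod, Finset.mem_coe, Finset.mem_powerset,
            Finset.inter_subset_right, true_and, mem_siftingSets]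
          exact ⟨hA.mono Finset.sdiff_subset,
            (modulus_mono hA.prime Finset.sdiff_subset).trans hD⟩
        · obtain ⟨htD, rfl⟩ := Finset.mem_filter.1 ht
          exact abs_selbergSqTerm_le htD
        · have := modulusTotient_pos (mem_siftingSets.1
            (Finset.mem_product.1 (Finset.mem_product.1 ht).2).2).1.prime
          positivity
    _ = _ := by
        simp only [Finset.sum_product, Finset.sum_const, Finset.card_powerset, ← Finset.mul_sum,
          nsmul_eq_mul, selbergMass]
        rw [show (4 : ℝ) = 2 * 2 by norm_num, mul_pow]
        push_cast
        ring

lemma sum_Icc_inv_sq_le_two (D : ℕ) : ∑ m ∈ Finset.Icc 1 D, 1 / (m : ℝ) ^ 2 ≤ 2 := by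
  rcases Nat.eq_zero_or_pos D with rfl | hD
  · simp
  have h := sum_Ioc_inv_sq_le_sub (α := ℝ) one_ne_zero hD
  have hD' : 0 ≤ (D : ℝ)⁻¹ := by positivity
  rw [← Finset.add_sum_Ioc_eq_sum_Icc hD]
  simp only [one_div, Nat.cast_one, inv_one, one_pow] at h ⊢
  linarith

/-- Every `n ≤ D` is a square times a squarefree number. -/
lemma sum_Icc_one_div_le_selbergMass_one_mul (D : ℕ) :
    ∑ n ∈ Finset.Icc 1 D, 1 / (n : ℝ) ≤
      selbergMass 1 D * ∑ m ∈ Finset.Icc 1 D, 1 / (m : ℝ) ^ 2 := by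
  choose a b hab hsq using Nat.sq_mul_squarefree
  have hmod (n : ℕ) : modulus (a n).primeFactors = a n :=
    Nat.prod_primeFactors_of_squarefree (hsq n)
  have hprime (n : ℕ) : ∀ p ∈ (a n).primeFactors, p.Prime := fun _ => Nat.prime_of_mem_primeFactors
  rw [selbergMass, Finset.sum_mul_sum, ← Finset.sum_product']
  refine sum_le_sum_of_injOn (fun n => ((a n).primeFactors, b n)) (fun n hn => ?_)
    (fun n _ m _ h => ?_) (fun n _ => ?_) fun t ht => ?_
  · obtain ⟨hn, hnD⟩ := Finset.mem_Icc.1 hn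
    have ha : 0 < a n := (hsq n).ne_zero.bot_lt
    have hb : 0 < b n := Nat.pos_of_ne_zero fun h => by
      have := hab n
      simp only [h, zero_pow two_ne_zero, zero_mul] at this
      omega
    simp only [Finset.coe_product, Set.mem_prod, Finset.mem_coe, mem_siftingSets,
      Finset.mem_Icc, hmod, Nat.succ_le_of_lt hb, true_and]
    refine ⟨⟨fun p hp => ⟨hprime n p hp, (hprime n p hp).not_dvd_one⟩, ?_⟩, ?_⟩
    · exact (Nat.le_mul_of_pos_left _ (by positivity)).trans ((hab n).le.trans hnD)
    · exact (Nat.le_self_pow two_ne_zero _).trans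
        ((Nat.le_mul_of_pos_right _ ha).trans ((hab n).le.trans hnD))
  · simp only [Prod.mk.injEq] at h
    rw [← hab n, ← hab m, ← hmod n, ← hmod m, h.1, h.2]
  · have hle := modulusTotient_le_modulus (hprime n)
    have hpos := modulusTotient_pos (hprime n)
    rw [hmod] at hle
    conv_lhs => rw [← hab n, Nat.cast_mul, Nat.cast_pow, mul_comm, ← one_div_mul_one_div]
    gcongr
  · have := modulusTotient_pos (mem_siftingSets.1 (Finset.mem_product.1 ht).1).1.prime
    positivity

lemma log_le_two_mul_selbergMass_one (D : ℕ) : Real.log D ≤ 2 * selbergMass 1 D := by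
  rcases Nat.eq_zero_or_pos D with rfl | hD
  · simp only [CharP.cast_eq_zero, Real.log_zero]
    exact mul_nonneg zero_le_two (Finset.sum_nonneg fun S hS =>
      (one_div_pos.2 (modulusTotient_pos (mem_siftingSets.1 hS).1.prime)).le)
  calc Real.log D ≤ ∑ n ∈ Finset.Icc 1 D, 1 / (n : ℝ) := by
        have h := log_add_one_le_harmonic D
        rw [harmonic_eq_sum_Icc] at h
        push_cast at h
        simp only [one_div]
        exact (Real.log_le_log (by exact_mod_cast hD) (by linarith)).trans h
    _ ≤ selbergMass 1 D * ∑ m ∈ Finset.Icc 1 D, 1 / (m : ℝ) ^ 2 :=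
        sum_Icc_one_div_le_selbergMass_one_mul D
    _ ≤ 2 * selbergMass 1 D := by
        rw [mul_comm]
        exact mul_le_mul_of_nonneg_right (sum_Icc_inv_sq_le_two D) (selbergMass_pos 1 hD).le

lemma totient_div_mul_sum_one_div_modulusTotient (hy : y ≠ 0) :
    (Nat.totient y : ℝ) / y * ∑ T ∈ y.primeFactors.powerset, 1 / modulusTotient T = 1 := by
  have htotient : (Nat.totient y : ℝ) / y = ∏ p ∈ y.primeFactors, (1 - (p : ℝ)⁻¹) := by
    have h : ((Nat.totient y : ℚ) : ℝ) = ((y * ∏ p ∈ y.primeFactors, (1 - (p : ℚ)⁻¹) : ℚ) : ℝ) :=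
      congrArg _ (Nat.totient_eq_mul_prod_factors y)
    push_cast at h
    rw [h, mul_div_cancel_left₀ _ (Nat.cast_ne_zero.2 hy)]
  have hsum : ∑ T ∈ y.primeFactors.powerset, 1 / modulusTotient T =
      ∏ p ∈ y.primeFactors, (1 / ((p : ℝ) - 1) + 1) := by
    rw [Finset.prod_add_one]
    exact Finset.sum_congr rfl fun T _ => by
      rw [modulusTotient, Finset.prod_div_distrib, Finset.prod_const_one]
  rw [htotient, hsum, ← Finset.prod_mul_distrib]
  refine Finset.prod_eq_one fun p hp => ?_
  have hp := Nat.prime_of_mem_primeFactors hp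
  have hp0 : (p : ℝ) ≠ 0 := Nat.cast_ne_zero.2 hp.ne_zero
  have hp1 := (natCast_sub_one_pos hp).ne'
  field_simp
  ring

/-- Splitting a squarefree modulus into its parts dividing `y` and coprime to `y`. -/
lemma selbergMass_one_le (hy : y ≠ 0) :
    selbergMass 1 D ≤
      (∑ T ∈ y.primeFactors.powerset, 1 / modulusTotient T) * selbergMass y D := by
  rw [selbergMass, selbergMass, Finset.sum_mul_sum, ← Finset.sum_product']
  refine sum_le_sum_of_injOn (fun S => (S ∩ y.primeFactors, S \ y.primeFactors)) (fun S hS => ?_)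
    (fun S _ T _ h => ?_) (fun S _ => ?_) fun t ht => ?_
  · obtain ⟨hS, hD⟩ := mem_siftingSets.1 hS
    refine Finset.mem_coe.2 (Finset.mem_product.2 ⟨Finset.mem_powerset.2 Finset.inter_subset_right,
      mem_siftingSets.2 ⟨fun p hp => ?_, (modulus_mono hS.prime Finset.sdiff_subset).trans hD⟩⟩)
    obtain ⟨hp, hpy⟩ := Finset.mem_sdiff.1 hp
    exact ⟨hS.prime p hp, fun h => hpy (Nat.mem_primeFactors.2 ⟨hS.prime p hp, h, hy⟩)⟩
  · simp only [Prod.mk.injEq] at h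
    rw [← Finset.sdiff_union_inter S y.primeFactors, ← Finset.sdiff_union_inter T y.primeFactors,
      h.1, h.2]
  · rw [one_div_mul_one_div, modulusTotient_inter_mul_sdiff]
  · obtain ⟨hT, hS⟩ := Finset.mem_product.1 ht
    have := modulusTotient_pos fun p hp =>
      Nat.prime_of_mem_primeFactors (Finset.mem_powerset.1 hT hp)
    have := modulusTotient_pos (mem_siftingSets.1 hS).1.prime
    positivity

lemma totient_div_mul_log_le_selbergMass (hy : y ≠ 0) (D : ℕ) :
    (Nat.totient y : ℝ) / y * Real.log D ≤ 2 * selbergMass y D :=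
  calc (Nat.totient y : ℝ) / y * Real.log D
      ≤ (Nat.totient y : ℝ) / y * (2 * ((∑ T ∈ y.primeFactors.powerset, 1 / modulusTotient T) *
          selbergMass y D)) := by
        gcongr
        exact (log_le_two_mul_selbergMass_one D).trans
          (mul_le_mul_of_nonneg_left (selbergMass_one_le hy) zero_le_two)
    _ = 2 * (((Nat.totient y : ℝ) / y *
          ∑ T ∈ y.primeFactors.powerset, 1 / modulusTotient T) * selbergMass y D) := by ring
    _ = 2 * selbergMass y D := by
        rw [totient_div_mul_sum_one_div_modulusTotient hy, one_mul]

end SelbergWeight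

/-! ### Complete and incomplete sums of Ramanujan sums -/

section CompleteSums

variable {y : ℕ} {S T : Finset ℕ}

lemma sum_range_mul_of_coprime_periods {R : Type*} [CommSemiring R] {f g : ℕ → R} {p q : ℕ}
    (hf : Function.Periodic f p) (hg : Function.Periodic g q) (h : Nat.Coprime p q) (hp : 0 < p)
    (hq : 0 < q) :
    ∑ m ∈ Finset.range (p * q), f m * g m =
      (∑ m ∈ Finset.range p, f m) * ∑ m ∈ Finset.range q, g m := by
  rw [Finset.sum_mul_sum, ← Finset.sum_product']
  refine Finset.sum_nbij (fun m => (m % p, m % q)) (fun m _ => ?_) (fun m hm n hn hmn => ?_) ?_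
    fun m _ => ?_
  · simp [Nat.mod_lt _ hp, Nat.mod_lt _ hq]
  · simp only [Prod.mk.injEq] at hmn
    simp only [Finset.coe_range, Set.mem_Iio] at hm hn
    exact ((Nat.modEq_and_modEq_iff_modEq_mul h).1 ⟨hmn.1, hmn.2⟩).eq_of_lt_of_lt hm hn
  · rintro ⟨a, b⟩ hab
    simp only [Finset.coe_product, Finset.coe_range, Set.mem_prod, Set.mem_Iio] at hab
    obtain ⟨ha, hb⟩ := (Nat.chineseRemainder h a b).2
    rw [Nat.ModEq, Nat.mod_eq_of_lt hab.1] at ha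
    rw [Nat.ModEq, Nat.mod_eq_of_lt hab.2] at hb
    exact ⟨Nat.chineseRemainder h a b,
      Finset.mem_coe.2 (Finset.mem_range.2 (Nat.chineseRemainder_lt_mul h a b hp.ne' hq.ne')),
      Prod.ext ha hb⟩
  · rw [hf.map_mod_nat, hg.map_mod_nat]

lemma sum_range_mul_of_periodic {R : Type*} [CommSemiring R] {f : ℕ → R} {q : ℕ}
    (hf : Function.Periodic f q) (t : ℕ) :
    ∑ m ∈ Finset.range (q * t), f m = t * ∑ m ∈ Finset.range q, f m := by
  induction t with
  | zero => simp
  | succ t ih =>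
    have hshift (i : ℕ) : f (q * t + i) = f i := by
      rw [add_comm, mul_comm]
      exact hf.nat_mul t i
    simp only [mul_add, mul_one, Finset.sum_range_add, ih, hshift, Nat.cast_add, Nat.cast_one,
      add_mul, one_mul]

lemma abs_sum_range_le_of_vanishing {f : ℕ → ℝ} {q : ℕ} {B : ℝ} (hq : 0 < q)
    (hB : ∀ m, |f m| ≤ B) (hf : ∀ a, ∑ i ∈ Finset.range q, f (a + i) = 0) (l a : ℕ) :
    |∑ i ∈ Finset.range l, f (a + i)| ≤ q * B := by
  have hB0 : 0 ≤ B := (abs_nonneg _).trans (hB 0)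
  induction l using Nat.strong_induction_on generalizing a with
  | _ l ih =>
    rcases lt_or_ge l q with hl | hl
    · calc |∑ i ∈ Finset.range l, f (a + i)| ≤ ∑ i ∈ Finset.range l, |f (a + i)| :=
            Finset.abs_sum_le_sum_abs _ _
        _ ≤ ∑ _i ∈ Finset.range l, B := Finset.sum_le_sum fun _ _ => hB _
        _ = l * B := by simp
        _ ≤ q * B := by gcongr
    · obtain ⟨k, rfl⟩ := Nat.exists_eq_add_of_le hl
      rw [Finset.sum_range_add, hf, zero_add]
      simpa only [add_assoc] using ih k (by omega) (a + q)

lemma ramanujan_periodic {q : ℕ} (hq : ∀ p ∈ S, p ∣ q) (c a : ℤ) :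
    Function.Periodic (fun m : ℕ => ramanujan S (c * m + a)) q := fun m =>
  Finset.prod_congr rfl fun p hp => by
    have hdvd : (p : ℤ) ∣ c * ((m + q : ℕ) : ℤ) + a ↔ (p : ℤ) ∣ c * m + a := by
      rw [show c * ((m + q : ℕ) : ℤ) + a = c * m + a + c * q by push_cast; ring]
      exact Int.dvd_add_left (dvd_mul_of_dvd_right (Int.natCast_dvd_natCast.2 (hq p hp)) c)
    simp only [hdvd]

lemma periodic_prod_modulus {f : ℕ → ℕ → ℝ} (hf : ∀ p ∈ S, Function.Periodic (f p) p) :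
    Function.Periodic (fun m => ∏ p ∈ S, f p m) (modulus S) := fun m =>
  Finset.prod_congr rfl fun p hp => by
    obtain ⟨c, hc⟩ := dvd_modulus hp
    rw [hc, mul_comm]
    exact (hf p hp).nat_mul c m

lemma coprime_modulus {p : ℕ} (hp : p.Prime) (hS : ∀ q ∈ S, q.Prime) (hpS : p ∉ S) :
    Nat.Coprime p (modulus S) :=
  Nat.Coprime.prod_right fun q hq =>
    (Nat.coprime_primes hp (hS q hq)).2 fun h => hpS (h ▸ hq)

lemma sum_range_modulus_prod {f : ℕ → ℕ → ℝ} (hS : ∀ p ∈ S, p.Prime)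
    (hf : ∀ p ∈ S, Function.Periodic (f p) p) :
    ∑ m ∈ Finset.range (modulus S), ∏ p ∈ S, f p m = ∏ p ∈ S, ∑ m ∈ Finset.range p, f p m := by
  induction S using Finset.induction_on with
  | empty => simp [modulus]
  | insert a S ha ih =>
    rw [Finset.forall_mem_insert] at hS hf
    simp only [modulus, Finset.prod_insert ha]
    rw [← ih hS.2 hf.2]
    exact sum_range_mul_of_coprime_periods hf.1 (periodic_prod_modulus hf.2)
      (coprime_modulus hS.1 hS.2 ha) hS.1.pos (modulus_pos hS.2)

section Prime

variable {p : ℕ} {c : ℤ}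

lemma sum_range_dvd_linear (hp : p.Prime) (hc : ¬ (p : ℤ) ∣ c) (a : ℤ) :
    ∑ m ∈ Finset.range p, (if (p : ℤ) ∣ c * m + a then (1 : ℝ) else 0) = 1 := by
  have : Fact p.Prime := ⟨hp⟩
  have hc' : (c : ZMod p) ≠ 0 := fun h => hc ((ZMod.intCast_zmod_eq_zero_iff_dvd c p).1 h)
  have hdvd (m : ℕ) : (p : ℤ) ∣ c * m + a ↔ (m : ZMod p) = -(a : ZMod p) / c := by
    rw [← ZMod.intCast_zmod_eq_zero_iff_dvd, eq_div_iff hc', eq_neg_iff_add_eq_zero, mul_comm]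
    push_cast
    rfl
  have hroot : ∀ m ∈ Finset.range p,
      (m : ZMod p) = -(a : ZMod p) / c ↔ m = (-(a : ZMod p) / c).val := fun m hm => by
    rw [← ZMod.val_cast_of_lt (Finset.mem_range.1 hm), (ZMod.val_injective p).eq_iff,
      ZMod.val_cast_of_lt (Finset.mem_range.1 hm)]
  simp only [hdvd]
  rw [Finset.sum_congr rfl fun m hm => if_congr (hroot m hm) rfl rfl, Finset.sum_ite_eq',
    if_pos (Finset.mem_range.2 (ZMod.val_lt _))]

lemma ramanujan_singleton (p : ℕ) (n : ℤ) :
    ramanujan {p} n = p * (if (p : ℤ) ∣ n then 1 else 0) - 1 := by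
  rw [ramanujan, Finset.prod_singleton]
  split_ifs <;> ring

lemma prod_ramanujan_singleton (S : Finset ℕ) (n : ℤ) :
    ∏ p ∈ S, ramanujan {p} n = ramanujan S n :=
  Finset.prod_congr rfl fun _ _ => Finset.prod_singleton _ _

lemma ramanujan_singleton_periodic (p : ℕ) (c a : ℤ) :
    Function.Periodic (fun m : ℕ => ramanujan {p} (c * m + a)) p :=
  ramanujan_periodic (fun _ hq => Finset.mem_singleton.1 hq ▸ dvd_rfl) c a

lemma sum_ramanujan_singleton (hp : p.Prime) (hc : ¬ (p : ℤ) ∣ c) (a : ℤ) :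
    ∑ m ∈ Finset.range p, ramanujan {p} (c * m + a) = 0 := by
  simp only [ramanujan_singleton]
  rw [Finset.sum_sub_distrib, ← Finset.mul_sum, sum_range_dvd_linear hp hc]
  simp

lemma sum_abs_ramanujan_singleton_le (hp : p.Prime) (hc : ¬ (p : ℤ) ∣ c) (a : ℤ) :
    ∑ m ∈ Finset.range p, |ramanujan {p} (c * m + a)| ≤ 2 * p := by
  calc ∑ m ∈ Finset.range p, |ramanujan {p} (c * m + a)|
      ≤ ∑ m ∈ Finset.range p, ((p : ℝ) * (if (p : ℤ) ∣ c * m + a then 1 else 0) + 1) := by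
        refine Finset.sum_le_sum fun m _ => ?_
        rw [ramanujan_singleton]
        refine (abs_sub _ _).trans_eq ?_
        split_ifs <;> simp
    _ = 2 * p := by
      rw [Finset.sum_add_distrib, ← Finset.mul_sum, sum_range_dvd_linear hp hc]
      simp only [mul_one, Finset.sum_const, Finset.card_range, nsmul_eq_mul]
      ring

lemma sum_ramanujan_singleton_conv (hp : p.Prime) (hc : ¬ (p : ℤ) ∣ c) (k : ℤ) :
    ∑ m ∈ Finset.range p, ramanujan {p} (c * m + 0) * ramanujan {p} (-c * m + k) =
      p * ramanujan {p} k := by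
  have hc' : ¬ (p : ℤ) ∣ -c := by rwa [dvd_neg]
  have hprod (m : ℕ) : (if (p : ℤ) ∣ c * m + 0 then (1 : ℝ) else 0) *
      (if (p : ℤ) ∣ -c * m + k then 1 else 0) =
      (if (p : ℤ) ∣ k then 1 else 0) * (if (p : ℤ) ∣ c * m + 0 then 1 else 0) := by
    by_cases h : (p : ℤ) ∣ c * m + 0
    · have hk : (p : ℤ) ∣ -c * m + k ↔ (p : ℤ) ∣ k := by
        refine Int.dvd_add_right ?_
        rwa [neg_mul, dvd_neg, ← add_zero (c * _)]
      simp only [if_pos h, hk, one_mul, mul_one]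
    · simp only [if_neg h, zero_mul, mul_zero]
  have hexpand (m : ℕ) : ramanujan {p} (c * m + 0) * ramanujan {p} (-c * m + k) =
      (p : ℝ) ^ 2 * ((if (p : ℤ) ∣ k then 1 else 0) * (if (p : ℤ) ∣ c * m + 0 then 1 else 0))
      - p * (if (p : ℤ) ∣ c * m + 0 then 1 else 0)
      - p * (if (p : ℤ) ∣ -c * m + k then 1 else 0) + 1 := by
    rw [← hprod, ramanujan_singleton, ramanujan_singleton]
    ring
  rw [Finset.sum_congr rfl fun m _ => hexpand m]
  simp only [Finset.sum_add_distrib, Finset.sum_sub_distrib, ← Finset.mul_sum,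
    sum_range_dvd_linear hp hc, sum_range_dvd_linear hp hc', ramanujan_singleton,
    Finset.sum_const, Finset.card_range, nsmul_eq_mul]
  ring

end Prime

lemma SiftingSet.not_intCast_dvd (hS : SiftingSet y S) {p : ℕ} (hp : p ∈ S) :
    ¬ (p : ℤ) ∣ (y : ℤ) := fun h => (hS p hp).2 (Int.natCast_dvd_natCast.1 h)

lemma sum_ramanujan_mul_ramanujan_sub (hS : SiftingSet y S) (k : ℤ) :
    ∑ m ∈ Finset.range (modulus S), ramanujan S (y * m) * ramanujan S (k - y * m) =
      modulus S * ramanujan S k := by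
  have hprod := sum_range_modulus_prod
    (f := fun p m => ramanujan {p} ((y : ℤ) * m + 0) * ramanujan {p} (-(y : ℤ) * m + k)) hS.prime
    fun p _ => (ramanujan_singleton_periodic p _ _).mul (ramanujan_singleton_periodic p _ _)
  rw [Finset.prod_congr rfl fun p hp =>
    sum_ramanujan_singleton_conv (hS.prime p hp) (hS.not_intCast_dvd hp) k] at hprod
  simp only [Finset.prod_mul_distrib, prod_ramanujan_singleton, add_zero, neg_mul,
    neg_add_eq_sub] at hprod
  rw [hprod, modulus, Nat.cast_prod]

lemma sum_abs_ramanujan_le (hS : SiftingSet y S) :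
    ∑ m ∈ Finset.range (modulus S), |ramanujan S (y * m)| ≤ 2 ^ S.card * modulus S := by
  have hprod := sum_range_modulus_prod (f := fun p m => |ramanujan {p} ((y : ℤ) * m + 0)|) hS.prime
    fun p _ m => congrArg abs (ramanujan_singleton_periodic p _ _ m)
  simp only [← Finset.abs_prod, prod_ramanujan_singleton] at hprod
  simp only [add_zero] at hprod
  rw [hprod, modulus, Nat.cast_prod, ← Finset.prod_const, ← Finset.prod_mul_distrib]
  refine Finset.prod_le_prod (fun _ _ => Finset.sum_nonneg fun _ _ => abs_nonneg _) fun p hp => ?_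
  simpa only [add_zero] using
    sum_abs_ramanujan_singleton_le (hS.prime p hp) (hS.not_intCast_dvd hp) 0

lemma sum_ramanujan_mul_ramanujan_eq_zero_of_mem (hS : SiftingSet y S) (hT : SiftingSet y T)
    {p : ℕ} (hpS : p ∈ S) (hpT : p ∉ T) (a b : ℤ) :
    ∑ m ∈ Finset.range (modulus (S ∪ T)), ramanujan S (y * m + a) * ramanujan T (y * m + b) =
      0 := by
  set U := (S ∪ T).erase p
  have hUprime : ∀ q ∈ U, q.Prime := fun q hq => (hS.union hT).prime q (Finset.mem_of_mem_erase hq)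
  have hmod : modulus (S ∪ T) = p * modulus U :=
    (Finset.mul_prod_erase _ _ (Finset.mem_union_left T hpS)).symm
  have hsplit (n : ℤ) : ramanujan S n = ramanujan {p} n * ramanujan (S.erase p) n := by
    rw [ramanujan, ← Finset.mul_prod_erase _ _ hpS, ramanujan, Finset.prod_singleton, ramanujan]
  have hperiod : Function.Periodic
      (fun m : ℕ => ramanujan (S.erase p) (y * m + a) * ramanujan T (y * m + b)) (modulus U) :=
    (ramanujan_periodic (fun q hq => dvd_modulus (Finset.mem_erase.2
      ⟨Finset.ne_of_mem_erase hq, Finset.mem_union_left T (Finset.mem_of_mem_erase hq)⟩)) _ _).mul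
    (ramanujan_periodic (fun q hq => dvd_modulus (Finset.mem_erase.2
      ⟨ne_of_mem_of_not_mem hq hpT, Finset.mem_union_right S hq⟩)) _ _)
  have hp := hS.prime p hpS
  simp only [hmod, hsplit, mul_assoc]
  rw [sum_range_mul_of_coprime_periods (ramanujan_singleton_periodic p _ _) hperiod
    (coprime_modulus hp hUprime (Finset.notMem_erase p _)) hp.pos (modulus_pos hUprime),
    sum_ramanujan_singleton hp (hS.not_intCast_dvd hpS), zero_mul]

lemma sum_ramanujan_mul_ramanujan_eq_zero (hS : SiftingSet y S) (hT : SiftingSet y T)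
    (hST : S ≠ T) (a b : ℤ) :
    ∑ m ∈ Finset.range (modulus (S ∪ T)), ramanujan S (y * m + a) * ramanujan T (y * m + b) =
      0 := by
  obtain ⟨p, hp⟩ := Finset.symmDiff_nonempty.2 hST
  rcases Finset.mem_symmDiff.1 hp with ⟨hpS, hpT⟩ | ⟨hpT, hpS⟩
  · exact sum_ramanujan_mul_ramanujan_eq_zero_of_mem hS hT hpS hpT a b
  · simpa only [mul_comm, Finset.union_comm] using
      sum_ramanujan_mul_ramanujan_eq_zero_of_mem hT hS hpT hpS b a

end CompleteSums

/-! ### The one-sided maximal function -/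

section MaximalFunction

variable {G : Type*} [AddCommGroup G] {u : G} {f : G → ℝ} {K n B : ℕ}

/-- The average of `f` along `K + 1` backward steps of length `u`. -/
def stepAvg (u : G) (f : G → ℝ) (K : ℕ) (x : G) : ℝ :=
  (∑ k ∈ Finset.range (K + 1), f (x - k • u)) / (K + 1)

/-- The one-sided maximal function over the averages of length at most `B + 1`. -/
def maxAvg (B : ℕ) (u : G) (f : G → ℝ) (x : G) : ℝ :=
  (Finset.range (B + 1)).sup' Finset.nonempty_range_add_one fun K => stepAvg u f K x

/-- The largest of the sums of `f` along at most `n` backward steps of length `u`, including the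
empty sum. -/
def maxSum (n : ℕ) (u : G) (f : G → ℝ) (x : G) : ℝ :=
  (Finset.range (n + 1)).sup' Finset.nonempty_range_add_one
    fun k => ∑ i ∈ Finset.range k, f (x - i • u)

lemma stepAvg_le_maxAvg (hK : K ≤ B) (u : G) (f : G → ℝ) (x : G) :
    stepAvg u f K x ≤ maxAvg B u f x :=
  Finset.le_sup' (fun K => stepAvg u f K x) (Finset.mem_range_succ_iff.2 hK)

lemma maxAvg_nonneg (hf : ∀ x, 0 ≤ f x) (x : G) : 0 ≤ maxAvg B u f x :=
  (div_nonneg (Finset.sum_nonneg fun _ _ => hf _) (by positivity)).trans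
    (stepAvg_le_maxAvg (Nat.zero_le B) u f x)

lemma le_maxSum (hK : K ≤ n) (u : G) (f : G → ℝ) (x : G) :
    ∑ i ∈ Finset.range K, f (x - i • u) ≤ maxSum n u f x :=
  Finset.le_sup' (fun k => ∑ i ∈ Finset.range k, f (x - i • u)) (Finset.mem_range_succ_iff.2 hK)

lemma maxSum_nonneg (n : ℕ) (u : G) (f : G → ℝ) (x : G) : 0 ≤ maxSum n u f x := by
  simpa using le_maxSum (Nat.zero_le n) u f x

lemma maxSum_le_add {x : G} (hx : 0 < maxSum n u f x) :
    maxSum n u f x ≤ f x + maxSum n u f (x - u) := by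
  obtain ⟨k, hk, hmax⟩ := Finset.exists_mem_eq_sup' (Finset.nonempty_range_add_one (n := n))
    fun k => ∑ i ∈ Finset.range k, f (x - i • u)
  replace hmax : maxSum n u f x = _ := hmax
  rw [hmax] at hx ⊢
  obtain _ | k := k
  · simp at hx
  · have hkn : k ≤ n := (Nat.le_succ k).trans (Finset.mem_range_succ_iff.1 hk)
    simpa [Finset.sum_range_succ', succ_nsmul', sub_sub, add_comm] using le_maxSum hkn u f (x - u)

lemma maxSum_sub_const_pos_iff {t : ℝ} {x : G} :
    0 < maxSum (B + 1) u (fun z => f z - t) x ↔ t < maxAvg B u f x := by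
  have hsum (K : ℕ) : 0 < ∑ i ∈ Finset.range (K + 1), (f (x - i • u) - t) ↔
      t < stepAvg u f K x := by
    rw [stepAvg, lt_div_iff₀ (by positivity), Finset.sum_sub_distrib, sub_pos]
    simp [mul_comm]
  simp only [maxSum, maxAvg, Finset.lt_sup'_iff, Finset.mem_range, ← hsum]
  refine ⟨fun ⟨k, hk, hpos⟩ => ?_, fun ⟨K, hK, hpos⟩ => ⟨K + 1, by lia, hpos⟩⟩
  obtain _ | K := k
  · simp at hpos
  · exact ⟨K, by lia, hpos⟩

variable [Fintype G]

lemma sum_comp_sub_right (f : G → ℝ) (a : G) : ∑ x, f (x - a) = ∑ x, f x :=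
  Equiv.sum_comp (Equiv.subRight a) f

/-- Hopf's maximal ergodic lemma. -/
lemma sum_nonneg_of_maxSum_pos (n : ℕ) (u : G) (f : G → ℝ) :
    0 ≤ ∑ x with 0 < maxSum n u f x, f x := by
  have hzero : ∑ x with 0 < maxSum n u f x, maxSum n u f x = ∑ x, maxSum n u f x :=
    Finset.sum_subset (Finset.subset_univ _) fun x _ hx =>
      le_antisymm (not_lt.1 (by simpa using hx)) (maxSum_nonneg n u f x)
  have hshift : ∑ x with 0 < maxSum n u f x, maxSum n u f (x - u) ≤ ∑ x, maxSum n u f x :=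
    (Finset.sum_le_univ_sum_of_nonneg fun _ => maxSum_nonneg n u f _).trans_eq
      (sum_comp_sub_right _ u)
  have hstep : ∑ x with 0 < maxSum n u f x, maxSum n u f x ≤
      ∑ x with 0 < maxSum n u f x, (f x + maxSum n u f (x - u)) :=
    Finset.sum_le_sum fun x hx => maxSum_le_add (Finset.mem_filter.1 hx).2
  rw [Finset.sum_add_distrib] at hstep
  linarith

lemma mul_card_lt_maxAvg_le_sum (B : ℕ) (u : G) (f : G → ℝ) (t : ℝ) :
    t * ({x | t < maxAvg B u f x} : Finset G).card ≤ ∑ x with t < maxAvg B u f x, f x := by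
  have h := sum_nonneg_of_maxSum_pos (B + 1) u fun x => f x - t
  simp only [maxSum_sub_const_pos_iff, Finset.sum_sub_distrib, Finset.sum_const, nsmul_eq_mul] at h
  linarith

end MaximalFunction

/-! ### Norms and the `ℓ²` maximal inequality -/

section L2

variable {X ι : Type*} [Fintype X] {f g : X → ℝ}

/-- The `ℓ²` norm of a function on a finite set. -/
def l2Norm (f : X → ℝ) : ℝ := √(∑ x, f x ^ 2)

lemma l2Norm_eq_norm (f : X → ℝ) : l2Norm f = ‖(WithLp.toLp 2 f : EuclideanSpace ℝ X)‖ := by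
  simp [EuclideanSpace.norm_eq, l2Norm]

lemma l2Norm_nonneg (f : X → ℝ) : 0 ≤ l2Norm f := Real.sqrt_nonneg _

lemma l2Norm_sq (f : X → ℝ) : l2Norm f ^ 2 = ∑ x, f x ^ 2 :=
  Real.sq_sqrt (Finset.sum_nonneg fun _ _ => sq_nonneg _)

lemma l2Norm_sum_le (s : Finset ι) (f : ι → X → ℝ) :
    l2Norm (fun x => ∑ i ∈ s, f i x) ≤ ∑ i ∈ s, l2Norm (f i) := by
  simp only [l2Norm_eq_norm]
  refine le_of_eq_of_le (congrArg norm ?_)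
    (norm_sum_le s fun i => (WithLp.toLp 2 (f i) : EuclideanSpace ℝ X))
  ext x
  simp

lemma l2Norm_const_mul (c : ℝ) (f : X → ℝ) : l2Norm (fun x => c * f x) = |c| * l2Norm f := by
  simp only [l2Norm, mul_pow]
  rw [← Finset.mul_sum, Real.sqrt_mul (sq_nonneg c), Real.sqrt_sq_eq_abs]

lemma l2Norm_abs (f : X → ℝ) : l2Norm (fun x => |f x|) = l2Norm f := by
  simp [l2Norm]

lemma l2Norm_comp_sub_right {G : Type*} [AddCommGroup G] [Fintype G] (f : G → ℝ) (a : G) :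
    l2Norm (fun x => f (x - a)) = l2Norm f :=
  congrArg Real.sqrt (sum_comp_sub_right (fun x => f x ^ 2) a)

lemma sum_mul_le_l2Norm_mul (f g : X → ℝ) : ∑ x, f x * g x ≤ l2Norm f * l2Norm g :=
  Real.sum_mul_le_sqrt_mul_sqrt _ f g

lemma setIntegral_indicator_Iio {a T : ℝ} (ha : 0 ≤ a) (haT : a ≤ T) (w : ℝ → ℝ) :
    ∫ t in Set.Ioc 0 T, (Set.Iio a).indicator w t = ∫ t in (0 : ℝ)..a, w t := by
  have hset : Set.Ioc 0 T ∩ Set.Iio a = Set.Ioo 0 a := by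
    ext t
    exact ⟨fun ⟨h, hta⟩ => ⟨h.1, hta⟩, fun ⟨h0, hta⟩ => ⟨⟨h0, (hta.trans_le haT).le⟩, hta⟩⟩
  rw [MeasureTheory.setIntegral_indicator measurableSet_Iio, hset,
    ← MeasureTheory.integral_Ioc_eq_integral_Ioo, ← intervalIntegral.integral_of_le ha]

/-- Integrate the hypothesis against `t ^ (p - 2)` (the layer-cake formula). -/
lemma sum_rpow_le_sum_mul_rpow_of_mul_card_lt_le {p : ℝ} (hp : 1 < p) (hg : ∀ x, 0 ≤ g x)
    (h : ∀ t : ℝ, t * ({x | t < g x} : Finset X).card ≤ ∑ x with t < g x, f x) :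
    ∑ x, g x ^ p ≤ p / (p - 1) * ∑ x, f x * g x ^ (p - 1) := by
  set T := ∑ x, g x
  have hT (x : X) : g x ≤ T := Finset.single_le_sum (fun x _ => hg x) (Finset.mem_univ x)
  have hint (c e a : ℝ) (he : -1 < e) : MeasureTheory.IntegrableOn
      ((Set.Iio a).indicator fun t => c * t ^ e) (Set.Ioc 0 T) :=
    (((intervalIntegral.intervalIntegrable_rpow' he).const_mul c).1).indicator measurableSet_Iio
  have hpoint (t : ℝ) (ht : t ∈ Set.Ioc 0 T) :
      ∑ x, (Set.Iio (g x)).indicator (fun t => 1 * t ^ (p - 1)) t ≤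
        ∑ x, (Set.Iio (g x)).indicator (fun t => f x * t ^ (p - 2)) t := by
    have hpow : t ^ (p - 1) = t * t ^ (p - 2) := by
      rw [← Real.rpow_one_add' ht.1.le (by linarith)]
      ring_nf
    have := mul_le_mul_of_nonneg_right (h t) (Real.rpow_nonneg ht.1.le (p - 2))
    simpa [Set.indicator, ← Finset.sum_filter, ← Finset.sum_mul, hpow, mul_assoc, mul_left_comm]
      using this
  have hmono := MeasureTheory.setIntegral_mono_on
    (MeasureTheory.integrable_finsetSum _ fun x _ => hint 1 (p - 1) (g x) (by linarith))
    (MeasureTheory.integrable_finsetSum _ fun x _ => hint (f x) (p - 2) (g x) (by linarith))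
    measurableSet_Ioc hpoint
  rw [MeasureTheory.integral_finsetSum _ fun x _ => hint 1 (p - 1) (g x) (by linarith),
    MeasureTheory.integral_finsetSum _ fun x _ => hint (f x) (p - 2) (g x) (by linarith)] at hmono
  have hint1 (a : ℝ) : ∫ t in (0 : ℝ)..a, t ^ (p - 1) = a ^ p / p := by
    rw [integral_rpow (Or.inl (by linarith)), sub_add_cancel,
      Real.zero_rpow (by linarith), sub_zero]
  have hint2 (a : ℝ) : ∫ t in (0 : ℝ)..a, t ^ (p - 2) = a ^ (p - 1) / (p - 1) := by
    rw [integral_rpow (Or.inl (by linarith)), show p - 2 + 1 = p - 1 by ring,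
      Real.zero_rpow (by linarith), sub_zero]
  simp only [setIntegral_indicator_Iio (hg _) (hT _), intervalIntegral.integral_const_mul, hint1,
    hint2, one_mul, ← mul_div_assoc, ← Finset.sum_div] at hmono
  rw [div_le_div_iff₀ (by linarith) (by linarith)] at hmono
  rw [div_mul_eq_mul_div, le_div_iff₀ (by linarith)]
  linarith

lemma sum_maxAvg_rpow_le {G : Type*} [AddCommGroup G] [Fintype G] {p : ℝ} (hp : 1 < p) (B : ℕ)
    (u : G) {f : G → ℝ} (hf : ∀ x, 0 ≤ f x) :
    ∑ x, maxAvg B u f x ^ p ≤ (p / (p - 1)) ^ p * ∑ x, f x ^ p := by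
  have hpq : p.HolderConjugate (p / (p - 1)) := Real.HolderConjugate.conjExponent hp
  set q := p / (p - 1)
  have hM (x : G) : 0 ≤ maxAvg B u f x := maxAvg_nonneg hf x
  have hyoung (x : G) : q * (f x * maxAvg B u f x ^ (p - 1)) ≤
      q ^ p * f x ^ p / p + maxAvg B u f x ^ p / q := by
    have h := Real.young_inequality_of_nonneg (mul_nonneg hpq.symm.nonneg (hf x))
      (Real.rpow_nonneg (hM x) (p - 1)) hpq
    rwa [Real.mul_rpow hpq.symm.nonneg (hf x), ← Real.rpow_mul (hM x), hpq.sub_one_mul_conj,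
      mul_assoc] at h
  have hsum : ∑ x, maxAvg B u f x ^ p ≤
      (q ^ p * ∑ x, f x ^ p) / p + (∑ x, maxAvg B u f x ^ p) / q :=
    calc _ ≤ ∑ x, q * (f x * maxAvg B u f x ^ (p - 1)) :=
          (sum_rpow_le_sum_mul_rpow_of_mul_card_lt_le hp hM
            (mul_card_lt_maxAvg_le_sum B u f)).trans_eq (Finset.mul_sum _ _ _)
      _ ≤ _ := Finset.sum_le_sum fun x _ => hyoung x
      _ = _ := by rw [Finset.sum_add_distrib, ← Finset.sum_div, ← Finset.sum_div, Finset.mul_sum]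
  refine le_of_mul_le_mul_right ?_ (inv_pos.2 hpq.pos)
  simp only [div_eq_mul_inv] at hsum
  linear_combination hsum + (∑ x, maxAvg B u f x ^ p) * hpq.inv_add_inv_eq_one

lemma l2Norm_maxAvg_le {G : Type*} [AddCommGroup G] [Fintype G] (B : ℕ) (u : G) {f : G → ℝ}
    (hf : ∀ x, 0 ≤ f x) : l2Norm (maxAvg B u f) ≤ 2 * l2Norm f := by
  have hfn := l2Norm_nonneg f
  refine le_of_sq_le_sq ?_ (by positivity)
  have h := sum_maxAvg_rpow_le one_lt_two B u hf
  norm_num [← l2Norm_sq] at h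
  linarith

end L2

/-! ### Almost orthogonal projections onto the frequencies of Ramanujan sums -/

section ShiftSum

variable {G : Type*} [AddCommGroup G]

/-- The weighted sum `∑ n ∈ s, a n * f (x - n • u)` of translates of `f`. -/
def shiftSum (s : Finset ℕ) (a : ℕ → ℝ) (u : G) (f : G → ℝ) (x : G) : ℝ :=
  ∑ n ∈ s, a n * f (x - n • u)

variable [Fintype G]

lemma l2Norm_shiftSum_le (s : Finset ℕ) (a : ℕ → ℝ) (u : G) (f : G → ℝ) :
    l2Norm (shiftSum s a u f) ≤ (∑ n ∈ s, |a n|) * l2Norm f := by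
  refine (l2Norm_sum_le s fun n x => a n * f (x - n • u)).trans_eq ?_
  simp only [l2Norm_const_mul, l2Norm_comp_sub_right, Finset.sum_mul]

lemma sum_shiftSum_mul (s : Finset ℕ) (a : ℕ → ℝ) (u : G) (f g : G → ℝ) :
    ∑ x, shiftSum s a u f x * g x = ∑ x, f x * shiftSum s a (-u) g x := by
  simp only [shiftSum, Finset.sum_mul, Finset.mul_sum]
  rw [Finset.sum_comm, Finset.sum_comm (s := Finset.univ)]
  refine Finset.sum_congr rfl fun n _ => ?_
  rw [← sum_comp_sub_right (fun x => f x * (a n * g (x - n • -u))) (n • u)]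
  refine Finset.sum_congr rfl fun x _ => ?_
  rw [smul_neg, sub_neg_eq_add, sub_add_cancel]
  ring

lemma sum_mul_comp_sub_eq (f g : G → ℝ) (u : G) {L m : ℕ} (hm : m ≤ L) (m' : ℕ) :
    ∑ x, f (x - m • u) * g (x - m' • u) = ∑ x, f (x - L • u) * g (x - (m' + L - m) • u) := by
  rw [← sum_comp_sub_right (fun x => f (x - m • u) * g (x - m' • u)) ((L - m) • u)]
  refine Finset.sum_congr rfl fun x _ => ?_
  rw [sub_sub, sub_sub, ← add_smul, ← add_smul, Nat.sub_add_cancel hm,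
    show L - m + m' = m' + L - m by lia]

lemma sum_range_mul_range_eq_sum_diagonals (L L' : ℕ) (a a' Γ : ℕ → ℝ) :
    ∑ m ∈ Finset.range L, ∑ m' ∈ Finset.range L', a m * a' m' * Γ (m' + L - m) =
      ∑ h ∈ Finset.range (L + L'),
        (∑ m ∈ Finset.Ico (L - h) (min L (L + L' - h)), a m * a' (m + h - L)) * Γ h := by
  simp only [Finset.sum_mul]
  rw [Finset.sum_sigma', Finset.sum_sigma']
  refine Finset.sum_nbij' (fun p => ⟨p.2 + L - p.1, p.1⟩) (fun p => ⟨p.2, p.2 + p.1 - L⟩)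
    ?_ ?_ ?_ ?_ ?_ <;> rintro ⟨m, m'⟩ h <;>
    simp only [Finset.mem_sigma, Finset.mem_range, Finset.mem_Ico, lt_min_iff, Sigma.mk.injEq,
      heq_eq_eq, and_true, true_and] at h ⊢
  · lia
  · lia
  · lia
  · lia
  · congr 3
    lia

lemma abs_sum_shiftSum_mul_shiftSum_le {L L' : ℕ} {a a' : ℕ → ℝ} {κ : ℝ}
    (hκ : ∀ h, |∑ m ∈ Finset.Ico (L - h) (min L (L + L' - h)), a m * a' (m + h - L)| ≤ κ)
    (u : G) (f g : G → ℝ) :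
    |∑ x, shiftSum (Finset.range L) a u f x * shiftSum (Finset.range L') a' u g x| ≤
      (L + L') * (κ * (l2Norm f * l2Norm g)) := by
  have hcorr (h : ℕ) :
      |∑ x, f (x - L • u) * g (x - h • u)| ≤ l2Norm f * l2Norm g := by
    refine abs_le_of_sq_le_sq ?_ (mul_nonneg (l2Norm_nonneg f) (l2Norm_nonneg g))
    rw [mul_pow, ← l2Norm_comp_sub_right f (L • u), ← l2Norm_comp_sub_right g (h • u), l2Norm_sq,
      l2Norm_sq]
    exact Finset.sum_mul_sq_le_sq_mul_sq _ _ _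
  have hexpand : ∑ x, shiftSum (Finset.range L) a u f x * shiftSum (Finset.range L') a' u g x =
      ∑ m ∈ Finset.range L, ∑ m' ∈ Finset.range L',
        a m * a' m' * ∑ x, f (x - L • u) * g (x - (m' + L - m) • u) := by
    simp only [shiftSum, Finset.sum_mul_sum]
    rw [Finset.sum_comm]
    refine Finset.sum_congr rfl fun m hm => ?_
    rw [Finset.sum_comm]
    refine Finset.sum_congr rfl fun m' _ => ?_
    rw [← sum_mul_comp_sub_eq f g u (Finset.mem_range.1 hm).le, Finset.mul_sum]
    exact Finset.sum_congr rfl fun x _ => by ring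
  rw [hexpand, sum_range_mul_range_eq_sum_diagonals L L' a a'
    fun h => ∑ x, f (x - L • u) * g (x - h • u)]
  refine (Finset.abs_sum_le_sum_abs _ _).trans ?_
  calc _ ≤ ∑ _h ∈ Finset.range (L + L'), κ * (l2Norm f * l2Norm g) :=
        Finset.sum_le_sum fun h _ => by
          rw [abs_mul]
          exact mul_le_mul (hκ h) (hcorr h) (abs_nonneg _) ((abs_nonneg _).trans (hκ h))
    _ = _ := by simp

end ShiftSum

section Projection

variable {y : ℕ} {Q S T : Finset ℕ} {G : Type*} [AddCommGroup G]

/-- The length of the averages defining `ramanujanProj`, a large power of the modulus: multiples of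
the modulus make the convolution exact, and the length beats the size of incomplete sums. -/
def projLength (Q : Finset ℕ) : ℕ := 64 * modulus Q ^ 5

/-- The averaged convolution of `f` with the Ramanujan sum of `Q` along multiples of `y • u`. Its
adjoint is the same operator with `u` replaced by `-u`. -/
def ramanujanProj (y : ℕ) (Q : Finset ℕ) (u : G) : (G → ℝ) → G → ℝ :=
  shiftSum (Finset.range (projLength Q))
    (fun m => ramanujan Q ((y : ℤ) * m) / projLength Q) (y • u)

lemma projLength_pos (hQ : ∀ p ∈ Q, p.Prime) : 0 < projLength Q :=
  Nat.mul_pos (by norm_num) (pow_pos (modulus_pos hQ) 5)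

lemma projLength_eq (Q : Finset ℕ) : projLength Q = modulus Q * (64 * modulus Q ^ 4) := by
  rw [projLength]
  ring

lemma sum_abs_ramanujan_div_projLength_le (hQ : SiftingSet y Q) :
    ∑ m ∈ Finset.range (projLength Q), |ramanujan Q ((y : ℤ) * m) / projLength Q| ≤
      2 ^ Q.card := by
  have hL : (0 : ℝ) < projLength Q := Nat.cast_pos.2 (projLength_pos hQ.prime)
  have hper : Function.Periodic (fun m : ℕ => |ramanujan Q ((y : ℤ) * m)|) (modulus Q) := by
    simpa using (ramanujan_periodic (fun p hp => dvd_modulus hp) y 0).comp abs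
  simp only [abs_div, abs_of_pos hL]
  rw [← Finset.sum_div, div_le_iff₀ hL, projLength_eq, sum_range_mul_of_periodic hper]
  calc _ ≤ ((64 * modulus Q ^ 4 : ℕ) : ℝ) * (2 ^ Q.card * modulus Q) := by
        gcongr
        exact sum_abs_ramanujan_le hQ
    _ = _ := by
        push_cast
        ring

lemma abs_sum_Ico_ramanujan_mul_ramanujan_le (hS : SiftingSet y S) (hT : SiftingSet y T)
    (hST : S ≠ T) (l r L h : ℕ) (hl : L ≤ l + h) :
    |∑ m ∈ Finset.Ico l r,
      ramanujan S ((y : ℤ) * m) * ramanujan T ((y : ℤ) * ((m + h - L : ℕ) : ℤ))| ≤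
      ((modulus S : ℝ) * modulus T) ^ 2 := by
  set H : ℕ → ℝ := fun m =>
    ramanujan S ((y : ℤ) * m) * ramanujan T ((y : ℤ) * m + (y : ℤ) * ((h : ℤ) - L)) with hH
  have hsum : ∑ m ∈ Finset.Ico l r,
      ramanujan S ((y : ℤ) * m) * ramanujan T ((y : ℤ) * ((m + h - L : ℕ) : ℤ)) =
      ∑ i ∈ Finset.range (r - l), H (l + i) := by
    rw [← Finset.sum_Ico_eq_sum_range]
    refine Finset.sum_congr rfl fun m hm => ?_
    rw [Nat.cast_sub (by grind)]
    simp only [hH, Nat.cast_add]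
    congr 2
    ring
  have hbound (m : ℕ) : |H m| ≤ (modulus S : ℝ) * modulus T := by
    rw [abs_mul]
    exact mul_le_mul (abs_ramanujan_le hS.prime _) (abs_ramanujan_le hT.prime _) (abs_nonneg _)
      (Nat.cast_nonneg _)
  have hvanish (a : ℕ) : ∑ i ∈ Finset.range (modulus (S ∪ T)), H (a + i) = 0 := by
    rw [← sum_ramanujan_mul_ramanujan_eq_zero hS hT hST (y * a) (y * a + y * (h - L))]
    refine Finset.sum_congr rfl fun i _ => ?_
    simp only [hH, Nat.cast_add]
    congr 2 <;> ring
  rw [hsum, sq]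
  refine (abs_sum_range_le_of_vanishing (modulus_pos (hS.union hT).prime) hbound hvanish _ _).trans
    (mul_le_mul_of_nonneg_right ?_ (by positivity))
  exact_mod_cast modulus_union_le hS.prime

variable [Fintype G]

lemma l2Norm_ramanujanProj_le (hQ : SiftingSet y Q) (u : G) (f : G → ℝ) :
    l2Norm (ramanujanProj y Q u f) ≤ 2 ^ Q.card * l2Norm f :=
  (l2Norm_shiftSum_le _ _ _ f).trans
    (mul_le_mul_of_nonneg_right (sum_abs_ramanujan_div_projLength_le hQ) (l2Norm_nonneg f))

lemma sum_ramanujanProj_mul (y : ℕ) (Q : Finset ℕ) (u : G) (f g : G → ℝ) :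
    ∑ x, ramanujanProj y Q u f x * g x = ∑ x, f x * ramanujanProj y Q (-u) g x := by
  rw [ramanujanProj, sum_shiftSum_mul, ramanujanProj, smul_neg]

lemma abs_sum_ramanujanProj_mul_le (hS : SiftingSet y S) (hT : SiftingSet y T) (hST : S ≠ T)
    (u : G) (f g : G → ℝ) :
    |∑ x, ramanujanProj y S u f x * ramanujanProj y T u g x| ≤
      (modulus S * modulus T : ℝ) ^ 2 * (1 / projLength S + 1 / projLength T) *
        (l2Norm f * l2Norm g) := by
  have hL : (0 : ℝ) < projLength S := Nat.cast_pos.2 (projLength_pos hS.prime)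
  have hL' : (0 : ℝ) < projLength T := Nat.cast_pos.2 (projLength_pos hT.prime)
  refine (abs_sum_shiftSum_mul_shiftSum_le
    (κ := (modulus S * modulus T : ℝ) ^ 2 / (projLength S * projLength T))
    (fun h => ?_) (y • u) f g).trans_eq (by field_simp; ring)
  simp only [div_mul_div_comm]
  rw [← Finset.sum_div, abs_div, abs_of_pos (mul_pos hL hL')]
  gcongr
  exact abs_sum_Ico_ramanujan_mul_ramanujan_le hS hT hST _ _ _ _ (by lia)

lemma modulus_mul_sq_mul_le {Y : ℕ} (hY : 0 < Y) (hS : modulus S ∈ Finset.Ico Y (2 * Y))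
    (hT : modulus T ∈ Finset.Ico Y (2 * Y)) :
    (modulus S * modulus T : ℝ) ^ 2 * (1 / projLength S + 1 / projLength T) ≤ 1 / (2 * Y) := by
  obtain ⟨hSY, hS2⟩ := Finset.mem_Ico.1 hS
  obtain ⟨hTY, hT2⟩ := Finset.mem_Ico.1 hT
  have : (0 : ℝ) < Y := Nat.cast_pos.2 hY
  have hSY : (Y : ℝ) ≤ modulus S := Nat.cast_le.2 hSY
  have hTY : (Y : ℝ) ≤ modulus T := Nat.cast_le.2 hTY
  have hS2 : (modulus S : ℝ) ≤ 2 * Y := by exact_mod_cast hS2.le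
  have hT2 : (modulus T : ℝ) ≤ 2 * Y := by exact_mod_cast hT2.le
  simp only [projLength, Nat.cast_mul, Nat.cast_pow, Nat.cast_ofNat]
  calc _ ≤ (2 * Y * (2 * Y)) ^ 2 * (1 / (64 * (Y : ℝ) ^ 5) + 1 / (64 * (Y : ℝ) ^ 5)) := by gcongr
    _ = 1 / (2 * Y) := by
        field_simp
        norm_num

lemma sum_ramanujanProj_mul_le {Y : ℕ} (hY : 0 < Y) {A : ℝ} (hS : SiftingSet y S)
    (hT : SiftingSet y T) (hSY : modulus S ∈ Finset.Ico Y (2 * Y))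
    (hTY : modulus T ∈ Finset.Ico Y (2 * Y)) (hA : (4 : ℝ) ^ S.card ≤ A) (u : G) (f g : G → ℝ)
    (hfg : S = T → f = g) :
    ∑ x, ramanujanProj y S u f x * ramanujanProj y T u g x ≤
      (if S = T then A * l2Norm f ^ 2 else 0) + 1 / (2 * Y) * (l2Norm f * l2Norm g) := by
  have hnorm := mul_nonneg (l2Norm_nonneg f) (l2Norm_nonneg g)
  split_ifs with hST
  · obtain rfl := hST
    obtain rfl := hfg rfl
    have hdiag : ∑ x, ramanujanProj y S u f x * ramanujanProj y S u f x ≤ A * l2Norm f ^ 2 :=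
      calc
        _ = l2Norm (ramanujanProj y S u f) ^ 2 := by
          rw [l2Norm_sq]
          simp only [sq]
        _ ≤ (2 ^ S.card * l2Norm f) ^ 2 :=
          pow_le_pow_left₀ (l2Norm_nonneg _) (l2Norm_ramanujanProj_le hS u f) 2
        _ = 4 ^ S.card * l2Norm f ^ 2 := by
          rw [mul_pow, ← pow_mul, mul_comm S.card, pow_mul]
          norm_num
        _ ≤ _ := mul_le_mul_of_nonneg_right hA (sq_nonneg _)
    have : 0 ≤ 1 / (2 * (Y : ℝ)) * (l2Norm f * l2Norm f) := by positivity
    linarith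
  · rw [zero_add]
    exact (le_abs_self _).trans ((abs_sum_ramanujanProj_mul_le hS hT hST u f g).trans
      (mul_le_mul_of_nonneg_right (modulus_mul_sq_mul_le hY hSY hTY) hnorm))

lemma card_le_of_modulus_mem_Ico {Y : ℕ} {s : Finset (Finset ℕ)} (hs : ∀ Q ∈ s, SiftingSet y Q)
    (hsY : ∀ Q ∈ s, modulus Q ∈ Finset.Ico Y (2 * Y)) : s.card ≤ Y := by
  have hcard := Finset.card_le_card_of_injOn modulus hsY
    (modulus_injOn.mono fun Q hQ => (hs Q hQ).prime)
  rw [Nat.card_Ico] at hcard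
  lia

/-- The adjoint operators satisfy the dual estimate by almost orthogonality. -/
lemma l2Norm_sum_ramanujanProj_sq_le {Y : ℕ} (hY : 0 < Y) {A : ℝ} {s : Finset (Finset ℕ)}
    (hs : ∀ Q ∈ s, SiftingSet y Q) (hsY : ∀ Q ∈ s, modulus Q ∈ Finset.Ico Y (2 * Y))
    (hA : ∀ Q ∈ s, (4 : ℝ) ^ Q.card ≤ A) (u : G) (g : Finset ℕ → G → ℝ) :
    l2Norm (fun x => ∑ Q ∈ s, ramanujanProj y Q u (g Q) x) ^ 2 ≤
      (A + 1) * ∑ Q ∈ s, l2Norm (g Q) ^ 2 := by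
  set W := ∑ Q ∈ s, l2Norm (g Q) ^ 2
  have hW : 0 ≤ W := Finset.sum_nonneg fun _ _ => sq_nonneg _
  have hexpand : l2Norm (fun x => ∑ Q ∈ s, ramanujanProj y Q u (g Q) x) ^ 2 =
      ∑ S ∈ s, ∑ T ∈ s, ∑ x, ramanujanProj y S u (g S) x * ramanujanProj y T u (g T) x := by
    rw [l2Norm_sq]
    simp only [sq, Finset.sum_mul_sum]
    rw [Finset.sum_comm]
    exact Finset.sum_congr rfl fun _ _ => Finset.sum_comm
  have hcs : (∑ Q ∈ s, l2Norm (g Q)) * ∑ Q ∈ s, l2Norm (g Q) ≤ Y * W := by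
    rw [← sq]
    refine sq_sum_le_card_mul_sum_sq.trans (mul_le_mul_of_nonneg_right ?_ hW)
    exact_mod_cast card_le_of_modulus_mem_Ico hs hsY
  calc _ ≤ ∑ S ∈ s, ∑ T ∈ s, ((if S = T then A * l2Norm (g S) ^ 2 else 0) +
          1 / (2 * Y) * (l2Norm (g S) * l2Norm (g T))) := by
        rw [hexpand]
        exact Finset.sum_le_sum fun S hS => Finset.sum_le_sum fun T hT =>
          sum_ramanujanProj_mul_le hY (hs S hS) (hs T hT) (hsY S hS) (hsY T hT) (hA S hS) u _ _
            (congrArg g)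
    _ = A * W + 1 / (2 * Y) * ((∑ Q ∈ s, l2Norm (g Q)) * ∑ Q ∈ s, l2Norm (g Q)) := by
        simp only [Finset.sum_add_distrib, Finset.sum_ite_eq, ← Finset.mul_sum, ← Finset.sum_mul]
        rw [Finset.sum_congr rfl fun Q hQ => if_pos hQ, ← Finset.mul_sum]
    _ ≤ A * W + 1 / (2 * Y) * (Y * W) := by gcongr
    _ ≤ (A + 1) * W := by
        have : (Y : ℝ) ≠ 0 := by exact_mod_cast hY.ne'
        field_simp
        linarith

/-- The `TT*` argument: bound the adjoint of `f ↦ (ramanujanProj y Q u f)_Q` instead. -/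
lemma sum_l2Norm_ramanujanProj_sq_le {Y : ℕ} (hY : 0 < Y) {A : ℝ} (hA0 : 0 ≤ A)
    {s : Finset (Finset ℕ)} (hs : ∀ Q ∈ s, SiftingSet y Q)
    (hsY : ∀ Q ∈ s, modulus Q ∈ Finset.Ico Y (2 * Y)) (hA : ∀ Q ∈ s, (4 : ℝ) ^ Q.card ≤ A)
    (u : G) (f : G → ℝ) :
    ∑ Q ∈ s, l2Norm (ramanujanProj y Q u f) ^ 2 ≤ (A + 1) * l2Norm f ^ 2 := by
  set W := ∑ Q ∈ s, l2Norm (ramanujanProj y Q u f) ^ 2 with hW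
  set V : G → ℝ := fun x => ∑ Q ∈ s, ramanujanProj y Q (-u) (ramanujanProj y Q u f) x with hV
  have hW0 : 0 ≤ W := Finset.sum_nonneg fun _ _ => sq_nonneg _
  have hdual : W ≤ l2Norm f * l2Norm V := by
    refine le_of_eq_of_le ?_ (sum_mul_le_l2Norm_mul f V)
    simp only [hV, hW, Finset.mul_sum, l2Norm_sq]
    simp only [sq, sum_ramanujanProj_mul]
    exact Finset.sum_comm
  have hV2 : l2Norm V ^ 2 ≤ (A + 1) * W := l2Norm_sum_ramanujanProj_sq_le hY hs hsY hA (-u) _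
  obtain h0 | h0 := hW0.eq_or_lt
  · rw [← h0]
    positivity
  · refine le_of_mul_le_mul_right ?_ h0
    calc W * W ≤ (l2Norm f * l2Norm V) * (l2Norm f * l2Norm V) :=
          mul_self_le_mul_self hW0 hdual
      _ = l2Norm f ^ 2 * l2Norm V ^ 2 := by ring
      _ ≤ l2Norm f ^ 2 * ((A + 1) * W) := by gcongr
      _ = (A + 1) * l2Norm f ^ 2 * W := by ring

end Projection

/-! ### Averages twisted by a Ramanujan sum -/

section TwistedAverages

variable {y N B : ℕ} {b : ℤ} {Q : Finset ℕ} {G : Type*} [AddCommGroup G]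

/-- The natural numbers below `N` congruent to `b` modulo `y`. -/
def progression (N y : ℕ) (b : ℤ) : Finset ℕ :=
  {n ∈ Finset.range N | (n : ℤ) % (y : ℤ) = b % (y : ℤ)}

/-- The least natural number congruent to `b` modulo `y` and divisible by `t`; it exists if `y` and
`t` are coprime. -/
def progressionStart (y : ℕ) (b : ℤ) (t : ℕ) : ℕ :=
  sInf {n : ℕ | (n : ℤ) % (y : ℤ) = b % (y : ℤ) ∧ t ∣ n}

/-- The average of `f` along a progression, twisted by the Ramanujan sum of `Q`. -/
def ramanujanAvg (y : ℕ) (b : ℤ) (N : ℕ) (Q : Finset ℕ) (u : G) (f : G → ℝ) (x : G) : ℝ :=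
  y / N * shiftSum (progression N y b) (fun n => ramanujan Q n) u f x

/-- The sum of shifted maximal functions that dominates the averages of `f` of length at most `B`
twisted by the Ramanujan sum of `Q`. -/
def modMax (y : ℕ) (b : ℤ) (B : ℕ) (Q : Finset ℕ) (u : G) (f : G → ℝ) (x : G) : ℝ :=
  ∑ T ∈ Q.powerset, 2 * maxAvg B ((y * modulus T) • u) (fun z => |f z|)
    (x - progressionStart y b (modulus T) • u)

lemma exists_eq_progressionStart_add {t n : ℕ} (hyt : Nat.Coprime y t)
    (hn : (n : ℤ) % (y : ℤ) = b % (y : ℤ)) (htn : t ∣ n) :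
    ∃ k, n = progressionStart y b t + k * (y * t) := by
  obtain ⟨hstart, htstart⟩ : ((progressionStart y b t : ℕ) : ℤ) % (y : ℤ) = b % (y : ℤ) ∧
      t ∣ progressionStart y b t :=
    Nat.sInf_mem (s := {n : ℕ | (n : ℤ) % (y : ℤ) = b % (y : ℤ) ∧ t ∣ n}) ⟨n, hn, htn⟩
  have hle : progressionStart y b t ≤ n := Nat.sInf_le ⟨hn, htn⟩
  have hy : y ∣ n - progressionStart y b t :=
    (Nat.modEq_iff_dvd' hle).1 (Int.natCast_modEq_iff.1 (hstart.trans hn.symm))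
  obtain ⟨k, hk⟩ := hyt.mul_dvd_of_dvd_of_dvd hy (Nat.dvd_sub htn htstart)
  exact ⟨k, by rw [mul_comm k, ← hk, Nat.add_sub_cancel' hle]⟩

lemma sum_progression_dvd_le_stepAvg {t : ℕ} (ht : 0 < y * t) (hyt : Nat.Coprime y t) (u : G)
    {g : G → ℝ} (hg : ∀ x, 0 ≤ g x) (x : G) :
    ∑ n ∈ progression N y b with t ∣ n, g (x - n • u) ≤
      ((N / (y * t) : ℕ) + 1) *
        stepAvg ((y * t) • u) g (N / (y * t)) (x - progressionStart y b t • u) := by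
  rw [stepAvg, mul_div_cancel₀ _ (by positivity)]
  have hmem (n : ℕ) (hn : n ∈ {n ∈ progression N y b | t ∣ n}) :
      n ∈ (Finset.range (N / (y * t) + 1)).image
        (fun k => progressionStart y b t + k * (y * t)) := by
    simp only [progression, Finset.mem_filter, Finset.mem_range] at hn
    obtain ⟨k, rfl⟩ := exists_eq_progressionStart_add hyt hn.1.2 hn.2
    refine Finset.mem_image_of_mem _ (Finset.mem_range_succ_iff.2 ?_)
    exact (Nat.le_div_iff_mul_le ht).2 ((Nat.le_add_left _ _).trans hn.1.1.le)
  refine (Finset.sum_le_sum_of_subset_of_nonneg hmem fun _ _ _ => hg _).trans_eq ?_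
  rw [Finset.sum_image fun k _ k' _ h => Nat.eq_of_mul_eq_mul_right ht (Nat.add_left_cancel h)]
  exact Finset.sum_congr rfl fun k _ => by rw [add_smul, mul_smul, sub_sub]

lemma sum_progression_dvd_le_maxAvg {t : ℕ} (ht : 0 < y * t) (hyt : Nat.Coprime y t)
    (hN : y * t ≤ N) (hNB : N ≤ B) (u : G) {g : G → ℝ} (hg : ∀ x, 0 ≤ g x) (x : G) :
    (y : ℝ) / N * (t * ∑ n ∈ progression N y b with t ∣ n, g (x - n • u)) ≤
      2 * maxAvg B ((y * t) • u) g (x - progressionStart y b t • u) := by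
  set K := N / (y * t)
  set M := maxAvg B ((y * t) • u) g (x - progressionStart y b t • u)
  have hM : 0 ≤ M := maxAvg_nonneg hg _
  have hN0 : (0 : ℝ) < N := Nat.cast_pos.2 (ht.trans_le hN)
  have hK : (K : ℝ) * (y * t) ≤ N := by exact_mod_cast Nat.div_mul_le_self N (y * t)
  have hyt' : (y : ℝ) * t ≤ N := by exact_mod_cast hN
  calc _ ≤ (y : ℝ) / N * (t * ((K + 1) * M)) := by
        gcongr
        refine (sum_progression_dvd_le_stepAvg ht hyt u hg x).trans ?_
        gcongr
        exact stepAvg_le_maxAvg ((Nat.div_le_self _ _).trans hNB) _ _ _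
    _ = (K * (y * t) + y * t) / N * M := by ring
    _ ≤ 2 * M := by
        gcongr
        rw [div_le_iff₀ hN0]
        linarith

lemma modMax_nonneg (y : ℕ) (b : ℤ) (B : ℕ) (Q : Finset ℕ) (u : G) (f : G → ℝ) (x : G) :
    0 ≤ modMax y b B Q u f x :=
  Finset.sum_nonneg fun _ _ => mul_nonneg zero_le_two (maxAvg_nonneg (fun _ => abs_nonneg _) _)

lemma abs_ramanujanAvg_le_modMax (hy : 0 < y) (hQ : SiftingSet y Q) (hN : y * modulus Q ≤ N)
    (hNB : N ≤ B) (u : G) (f : G → ℝ) (x : G) :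
    |ramanujanAvg y b N Q u f x| ≤ modMax y b B Q u f x := by
  rw [ramanujanAvg, shiftSum, abs_mul, abs_of_nonneg (by positivity : (0 : ℝ) ≤ y / N)]
  calc _ ≤ (y : ℝ) / N * ∑ n ∈ progression N y b, ∑ T ∈ Q.powerset,
        (if modulus T ∣ n then (modulus T : ℝ) else 0) * |f (x - n • u)| := by
        refine mul_le_mul_of_nonneg_left ((Finset.abs_sum_le_sum_abs _ _).trans
          (Finset.sum_le_sum fun n _ => ?_)) (by positivity)
        rw [abs_mul, ← Finset.sum_mul]
        refine mul_le_mul_of_nonneg_right ?_ (abs_nonneg _)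
        exact_mod_cast abs_ramanujan_le_sum hQ.prime n
    _ = ∑ T ∈ Q.powerset, (y : ℝ) / N *
        (modulus T * ∑ n ∈ progression N y b with modulus T ∣ n, |f (x - n • u)|) := by
        rw [Finset.sum_comm, Finset.mul_sum]
        simp only [Finset.sum_filter, Finset.mul_sum, ite_mul, zero_mul, mul_ite, mul_zero]
    _ ≤ _ := by
        refine Finset.sum_le_sum fun T hT => ?_
        rw [Finset.mem_powerset] at hT
        have hTQ := hQ.mono hT
        exact sum_progression_dvd_le_maxAvg (Nat.mul_pos hy (modulus_pos hTQ.prime))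
          hTQ.coprime_modulus ((Nat.mul_le_mul_left y (modulus_mono hQ.prime hT)).trans hN) hNB u
          (fun _ => abs_nonneg _) x

/-- The sum of `f` over the windows of length `l` at both ends of `[0, N]`. -/
def edgeSum (l N : ℕ) (u : G) (f : G → ℝ) (x : G) : ℝ :=
  ∑ k ∈ Finset.range l, f (x - k • u) + ∑ k ∈ Finset.range l, f (x - (N + k) • u)

lemma sum_edgeSum [Fintype G] (l N : ℕ) (u : G) (f : G → ℝ) :
    ∑ x, edgeSum l N u f x = 2 * l * ∑ x, f x := by
  simp only [edgeSum]
  rw [Finset.sum_add_distrib, Finset.sum_comm, Finset.sum_comm (s := Finset.univ)]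
  simp only [sum_comp_sub_right, Finset.sum_const, Finset.card_range, nsmul_eq_mul]
  ring

lemma edgeSum_nonneg {f : G → ℝ} (hf : ∀ x, 0 ≤ f x) (l N : ℕ) (u x : G) :
    0 ≤ edgeSum l N u f x :=
  add_nonneg (Finset.sum_nonneg fun _ _ => hf _) (Finset.sum_nonneg fun _ _ => hf _)

lemma edgeSum_mono {f : G → ℝ} (hf : ∀ x, 0 ≤ f x) {l l' : ℕ} (h : l ≤ l') (N : ℕ) (u x : G) :
    edgeSum l N u f x ≤ edgeSum l' N u f x :=
  have hsub := Finset.range_subset_range.2 h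
  add_le_add (Finset.sum_le_sum_of_subset_of_nonneg hsub fun _ _ _ => hf _)
    (Finset.sum_le_sum_of_subset_of_nonneg hsub fun _ _ _ => hf _)

lemma abs_sum_range_add_sub_sum_range_le (h : ℕ → ℝ) (N a : ℕ) :
    |∑ n ∈ Finset.range N, h (n + a) - ∑ n ∈ Finset.range N, h n| ≤
      ∑ k ∈ Finset.range a, |h k| + ∑ k ∈ Finset.range a, |h (N + k)| := by
  have hsplit : ∑ n ∈ Finset.range N, h (n + a) - ∑ n ∈ Finset.range N, h n =
      ∑ k ∈ Finset.range a, h (N + k) - ∑ k ∈ Finset.range a, h k := by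
    have hNa := Finset.sum_range_add h N a
    rw [add_comm N a, Finset.sum_range_add] at hNa
    simp only [add_comm _ a]
    linarith
  rw [hsplit, add_comm (∑ k ∈ Finset.range a, |h k|)]
  exact (abs_sub _ _).trans
    (add_le_add (Finset.abs_sum_le_sum_abs _ _) (Finset.abs_sum_le_sum_abs _ _))

/-- The term at `k` of the average of `f` twisted by `n ↦ c_q(y m) c_q(n - y m)`, whose mean over
`m` is the Ramanujan sum `c_q(n)`. -/
def splitTerm (y : ℕ) (b : ℤ) (Q : Finset ℕ) (u : G) (f : G → ℝ) (x : G) (m k : ℕ) : ℝ :=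
  if (k : ℤ) % (y : ℤ) = b % (y : ℤ) then
    ramanujan Q ((y : ℤ) * m) * ramanujan Q (k - y * m) * f (x - k • u) else 0

lemma abs_splitTerm_le (hQ : ∀ p ∈ Q, p.Prime) (u : G) {f : G → ℝ} (hf : ∀ x, 0 ≤ f x) (x : G)
    (m k : ℕ) : |splitTerm y b Q u f x m k| ≤ modulus Q ^ 2 * f (x - k • u) := by
  rw [splitTerm]
  split_ifs
  · rw [abs_mul, abs_mul, abs_of_nonneg (hf _), sq]
    have hm := abs_ramanujan_le hQ ((y : ℤ) * m)
    have hk := abs_ramanujan_le hQ ((k : ℤ) - y * m)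
    have := hf (x - k • u)
    gcongr
  · rw [abs_zero]
    exact mul_nonneg (sq_nonneg _) (hf _)

lemma sum_ramanujan_mul_ramanujan_sub_div_projLength (hQ : SiftingSet y Q) (k : ℤ) :
    (∑ m ∈ Finset.range (projLength Q), ramanujan Q ((y : ℤ) * m) * ramanujan Q (k - y * m)) /
      projLength Q = ramanujan Q k := by
  have hperiodic : Function.Periodic
      (fun m : ℕ => ramanujan Q ((y : ℤ) * m) * ramanujan Q (k - y * m)) (modulus Q) := by
    simpa [neg_add_eq_sub] using
      (ramanujan_periodic (fun p hp => dvd_modulus hp) (y : ℤ) 0).mul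
        (ramanujan_periodic (fun p hp => dvd_modulus hp) (-y : ℤ) k)
  have hL : (projLength Q : ℝ) ≠ 0 := Nat.cast_ne_zero.2 (projLength_pos hQ.prime).ne'
  rw [div_eq_iff hL, projLength_eq, sum_range_mul_of_periodic hperiodic,
    sum_ramanujan_mul_ramanujan_sub hQ]
  push_cast
  ring

lemma ramanujanAvg_eq_sum_splitTerm (hQ : SiftingSet y Q) (u : G) (f : G → ℝ) (x : G) :
    ramanujanAvg y b N Q u f x = y / N * ((∑ m ∈ Finset.range (projLength Q),
      ∑ k ∈ Finset.range N, splitTerm y b Q u f x m k) / projLength Q) := by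
  rw [ramanujanAvg, Finset.sum_comm, Finset.sum_div, shiftSum, progression, Finset.sum_filter]
  refine congrArg _ (Finset.sum_congr rfl fun k _ => ?_)
  simp only [splitTerm]
  split_ifs
  · rw [← Finset.sum_mul, mul_div_right_comm, sum_ramanujan_mul_ramanujan_sub_div_projLength hQ]
  · simp

lemma ramanujanAvg_ramanujanProj_eq_sum_splitTerm (y : ℕ) (b : ℤ) (N : ℕ) (Q : Finset ℕ) (u : G)
    (f : G → ℝ) (x : G) :
    ramanujanAvg y b N Q u (ramanujanProj y Q u f) x = y / N * ((∑ m ∈ Finset.range (projLength Q),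
      ∑ k ∈ Finset.range N, splitTerm y b Q u f x m (k + y * m)) / projLength Q) := by
  rw [ramanujanAvg, Finset.sum_comm, Finset.sum_div, shiftSum, progression, Finset.sum_filter]
  refine congrArg _ (Finset.sum_congr rfl fun k _ => ?_)
  simp only [splitTerm, Nat.cast_add, Nat.cast_mul, Int.add_mul_emod_self_left,
    add_sub_cancel_right]
  split_ifs
  · rw [ramanujanProj, shiftSum, Finset.mul_sum, Finset.sum_div]
    refine Finset.sum_congr rfl fun m _ => ?_
    rw [add_smul, sub_sub, mul_comm y m, mul_smul]
    ring
  · simp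

lemma abs_ramanujanAvg_sub_ramanujanProj_le (b : ℤ) (hQ : SiftingSet y Q) (N : ℕ) (u : G)
    {f : G → ℝ} (hf : ∀ x, 0 ≤ f x) (x : G) :
    |ramanujanAvg y b N Q u f x - ramanujanAvg y b N Q u (ramanujanProj y Q u f) x| ≤
      y * modulus Q ^ 2 / N * edgeSum (y * projLength Q) N u f x := by
  have hL : (0 : ℝ) < projLength Q := Nat.cast_pos.2 (projLength_pos hQ.prime)
  have hterm (m : ℕ) (hm : m ∈ Finset.range (projLength Q)) :
      |∑ k ∈ Finset.range N, splitTerm y b Q u f x m k -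
        ∑ k ∈ Finset.range N, splitTerm y b Q u f x m (k + y * m)| ≤
      modulus Q ^ 2 * edgeSum (y * projLength Q) N u f x := by
    rw [abs_sub_comm]
    calc _ ≤ ∑ k ∈ Finset.range (y * m), (modulus Q : ℝ) ^ 2 * f (x - k • u) +
          ∑ k ∈ Finset.range (y * m), (modulus Q : ℝ) ^ 2 * f (x - (N + k) • u) :=
          (abs_sum_range_add_sub_sum_range_le _ N (y * m)).trans
            (add_le_add (Finset.sum_le_sum fun _ _ => abs_splitTerm_le hQ.prime u hf x _ _)
              (Finset.sum_le_sum fun _ _ => abs_splitTerm_le hQ.prime u hf x _ _))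
      _ = modulus Q ^ 2 * edgeSum (y * m) N u f x := by
          rw [edgeSum, mul_add, Finset.mul_sum, Finset.mul_sum]
      _ ≤ _ := mul_le_mul_of_nonneg_left
          (edgeSum_mono hf (Nat.mul_le_mul_left y (Finset.mem_range.1 hm).le) N u x) (sq_nonneg _)
  rw [ramanujanAvg_eq_sum_splitTerm hQ, ramanujanAvg_ramanujanProj_eq_sum_splitTerm, ← mul_sub,
    ← sub_div, ← Finset.sum_sub_distrib, abs_mul,
    abs_of_nonneg (by positivity : (0 : ℝ) ≤ y / N), abs_div, abs_of_pos hL]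
  calc _ ≤ (y : ℝ) / N * ((projLength Q *
        (modulus Q ^ 2 * edgeSum (y * projLength Q) N u f x)) / projLength Q) := by
        gcongr
        refine (Finset.abs_sum_le_sum_abs _ _).trans ((Finset.sum_le_sum hterm).trans_eq ?_)
        rw [Finset.sum_const, Finset.card_range, nsmul_eq_mul]
    _ = _ := by field_simp

end TwistedAverages

/-! ### Selberg's majorant of the prime averages -/

section SelbergMajorant

variable {y D n N : ℕ} {b : ℤ} {Q : Finset ℕ} {G : Type*} [AddCommGroup G]

/-- The average of `f` over the primes congruent to `b` modulo `y`, along the multiples of an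
element `u` of an abelian group; for `u = 1` in `ℤ` it is `pavg`. -/
def groupPavg (y : ℕ) (b : ℤ) (N : ℕ) (u : G) (f : G → ℝ) (x : G) : ℝ :=
  (Nat.totient y : ℝ) / N * shiftSum (progression N y b) ArithmeticFunction.vonMangoldt u f x

/-- The sum of `f` over the powers, with exponent below `n`, of the integers at most `D`. It
accounts for the prime powers that Selberg's weight does not majorize. -/
def powerSum (D n : ℕ) (u : G) (f : G → ℝ) (x : G) : ℝ :=
  ∑ p ∈ Finset.range (D + 1), ∑ k ∈ Finset.range n, f (x - p ^ k • u)

lemma powerSum_nonneg {f : G → ℝ} (hf : ∀ x, 0 ≤ f x) (D n : ℕ) (u x : G) :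
    0 ≤ powerSum D n u f x :=
  Finset.sum_nonneg fun _ _ => Finset.sum_nonneg fun _ _ => hf _

lemma sum_powerSum [Fintype G] (D n : ℕ) (u : G) (f : G → ℝ) :
    ∑ x, powerSum D n u f x = (D + 1) * n * ∑ x, f x := by
  unfold powerSum
  rw [Finset.sum_comm]
  simp only [Finset.sum_comm (s := Finset.univ), sum_comp_sub_right, Finset.sum_const,
    Finset.card_range, nsmul_eq_mul, Nat.cast_add, Nat.cast_one, mul_assoc]

lemma one_le_sum_pow_eq {p k : ℕ} (hp : p ≤ D) (hk : k < N) :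
    (1 : ℝ) ≤ ∑ p' ∈ Finset.range (D + 1), ∑ k' ∈ Finset.range N,
      if p' ^ k' = p ^ k then 1 else 0 := by
  rw [← Finset.sum_product', Finset.sum_boole, Nat.one_le_cast, Finset.one_le_card]
  exact ⟨(p, k), by simp [Nat.lt_succ_of_le hp, hk]⟩

lemma one_le_selbergSum_div_sq_add (y : ℕ) (hD : 1 ≤ D) (hn : IsPrimePow n) (hnN : n < 2 ^ N) :
    1 ≤ (selbergSum y D n / selbergMass y D) ^ 2 +
      ∑ p ∈ Finset.range (D + 1), ∑ k ∈ Finset.range N, if p ^ k = n then (1 : ℝ) else 0 := by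
  obtain ⟨p, k, hp, _, rfl⟩ := (isPrimePow_nat_iff n).1 hn
  by_cases hpD : p ≤ D
  · have hkN : k < N :=
      (Nat.pow_lt_pow_iff_right one_lt_two).1 ((Nat.pow_le_pow_left hp.two_le k).trans_lt hnN)
    exact (one_le_sum_pow_eq hpD hkN).trans (le_add_of_nonneg_left (sq_nonneg _))
  · have hcoprime (p' : ℕ) (hp' : p'.Prime) (hp'D : p' ≤ D) : ¬ (p' : ℤ) ∣ (p ^ k : ℕ) := fun h =>
      hpD ((Nat.prime_dvd_prime_iff_eq hp' hp).1
        (hp'.dvd_of_dvd_pow (Int.natCast_dvd_natCast.1 h)) ▸ hp'D)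
    rw [selbergSum_eq_selbergMass hcoprime, div_self (selbergMass_pos y hD).ne', one_pow]
    exact le_add_of_nonneg_right (Finset.sum_nonneg fun _ _ => Finset.sum_nonneg fun _ _ => by
      positivity)

lemma vonMangoldt_le_log_mul_selbergSum_div_sq_add (y : ℕ) (hD : 1 ≤ D) (hn : n < 2 ^ N) :
    ArithmeticFunction.vonMangoldt n ≤ Real.log (2 ^ N) *
      ((selbergSum y D n / selbergMass y D) ^ 2 +
        ∑ p ∈ Finset.range (D + 1), ∑ k ∈ Finset.range N, if p ^ k = n then 1 else 0) := by
  have hlog : 0 ≤ Real.log (2 ^ N) := Real.log_nonneg (one_le_pow₀ one_le_two)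
  by_cases hpow : IsPrimePow n
  · have hle : ArithmeticFunction.vonMangoldt n ≤ Real.log (2 ^ N) :=
      ArithmeticFunction.vonMangoldt_le_log.trans
        (Real.log_le_log (by exact_mod_cast hpow.pos) (by exact_mod_cast hn.le))
    exact hle.trans
      (le_mul_of_one_le_right hlog (one_le_selbergSum_div_sq_add y hD hpow hn))
  · rw [ArithmeticFunction.vonMangoldt_eq_zero_iff.2 hpow]
    have : (0 : ℝ) ≤ ∑ p ∈ Finset.range (D + 1), ∑ k ∈ Finset.range N,
        if p ^ k = n then 1 else 0 :=
      Finset.sum_nonneg fun _ _ => Finset.sum_nonneg fun _ _ => by positivity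
    positivity

lemma sum_progression_pow_eq_le_powerSum {f : G → ℝ} (hf : ∀ x, 0 ≤ f x) (s : Finset ℕ) (u x : G) :
    ∑ n ∈ s, (∑ p ∈ Finset.range (D + 1), ∑ k ∈ Finset.range N, if p ^ k = n then (1 : ℝ) else 0) *
      f (x - n • u) ≤ powerSum D N u f x := by
  simp only [Finset.sum_mul, ite_mul, one_mul, zero_mul]
  rw [Finset.sum_comm]
  refine Finset.sum_le_sum fun p _ => ?_
  rw [Finset.sum_comm]
  refine Finset.sum_le_sum fun k _ => ?_
  rw [Finset.sum_ite_eq]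
  split_ifs
  · exact le_rfl
  · exact hf _

lemma shiftSum_vonMangoldt_le (hD : 1 ≤ D) (u : G) {f : G → ℝ} (hf : ∀ x, 0 ≤ f x) (x : G) :
    shiftSum (progression (2 ^ N) y b) ArithmeticFunction.vonMangoldt u f x ≤ Real.log (2 ^ N) *
      (shiftSum (progression (2 ^ N) y b)
        (fun n => (selbergSum y D n / selbergMass y D) ^ 2) u f x + powerSum D N u f x) := by
  have hlog : 0 ≤ Real.log (2 ^ N) := Real.log_nonneg (one_le_pow₀ one_le_two)
  refine le_trans ?_ (mul_le_mul_of_nonneg_left (add_le_add_right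
    (sum_progression_pow_eq_le_powerSum hf (progression (2 ^ N) y b) u x) _) hlog)
  rw [shiftSum, shiftSum, ← Finset.sum_add_distrib, Finset.mul_sum]
  refine Finset.sum_le_sum fun n hn => ?_
  have hn : n < 2 ^ N := Finset.mem_range.1 (Finset.mem_filter.1 hn).1
  rw [← add_mul, ← mul_assoc]
  exact mul_le_mul_of_nonneg_right (vonMangoldt_le_log_mul_selbergSum_div_sq_add y hD hn) (hf _)

lemma div_mul_shiftSum_selbergSum_div_sq (y D : ℕ) (b : ℤ) (N : ℕ) (u : G) (f : G → ℝ) (x : G) :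
    (y : ℝ) / N *
        shiftSum (progression N y b) (fun n => (selbergSum y D n / selbergMass y D) ^ 2) u f x =
      ∑ Q ∈ siftingSets y (D * D),
        selbergSqCoeff y D Q / selbergMass y D ^ 2 * ramanujanAvg y b N Q u f x := by
  simp only [ramanujanAvg, shiftSum, div_pow, selbergSum_sq, Finset.mul_sum, Finset.sum_div,
    Finset.sum_mul]
  rw [Finset.sum_comm]
  refine Finset.sum_congr rfl fun Q _ => Finset.sum_congr rfl fun n _ => ?_
  ring

lemma totient_div_mul_abs_selbergSqCoeff_div_sq_le {L c : ℝ} (hy : y ≠ 0) (hD : 2 ≤ D) (hL : 0 ≤ L)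
    (hc : L ≤ c * Real.log D) (hQ : ∀ p ∈ Q, p.Prime) :
    (Nat.totient y : ℝ) / y * L * (|selbergSqCoeff y D Q| / selbergMass y D ^ 2) ≤
      2 * c * (8 ^ Q.card / modulus Q) := by
  have hmass := selbergMass_pos y (one_le_two.trans hD)
  have hc0 : 0 ≤ c := nonneg_of_mul_nonneg_left (hL.trans hc)
    (Real.log_pos (by exact_mod_cast hD))
  have htotient := modulusTotient_pos hQ
  have hmodulus : (0 : ℝ) < modulus Q := Nat.cast_pos.2 (modulus_pos hQ)
  have hweight : 4 ^ Q.card / modulusTotient Q ≤ 8 ^ Q.card / modulus Q := by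
    rw [div_le_div_iff₀ htotient hmodulus, (by norm_num : (8 : ℝ) = 4 * 2), mul_pow, mul_assoc]
    exact mul_le_mul_of_nonneg_left (modulus_le_two_pow_mul_modulusTotient hQ) (by positivity)
  calc _ ≤ (Nat.totient y : ℝ) / y * (c * Real.log D) *
        (4 ^ Q.card / modulusTotient Q * selbergMass y D / selbergMass y D ^ 2) := by
        gcongr
        exact abs_selbergSqCoeff_le y D hQ
    _ = c * ((Nat.totient y : ℝ) / y * Real.log D) / selbergMass y D *
        (4 ^ Q.card / modulusTotient Q) := by
        field_simp
    _ ≤ c * (2 * selbergMass y D) / selbergMass y D * (8 ^ Q.card / modulus Q) := by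
        gcongr c * ?_ / _ * ?_
        exact totient_div_mul_log_le_selbergMass hy D
    _ = _ := by
        field_simp

lemma groupPavg_le {c : ℝ} (hy : 0 < y) (hD : 2 ≤ D) (hc : Real.log (2 ^ N) ≤ c * Real.log D)
    (b : ℤ) (u : G) {f : G → ℝ} (hf : ∀ x, 0 ≤ f x) (x : G) :
    groupPavg y b (2 ^ N) u f x ≤
      ∑ Q ∈ siftingSets y (D * D),
        2 * c * (8 ^ Q.card / modulus Q) * |ramanujanAvg y b (2 ^ N) Q u f x| +
      (y : ℝ) / 2 ^ N * (Real.log (2 ^ N) * powerSum D N u f x) := by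
  have hlog : 0 ≤ Real.log (2 ^ N) := Real.log_nonneg (one_le_pow₀ one_le_two)
  have hpow := powerSum_nonneg hf D N u x
  have hterm (Q : Finset ℕ) (hQ : Q ∈ siftingSets y (D * D)) :
      (Nat.totient y : ℝ) / y * Real.log (2 ^ N) *
        (selbergSqCoeff y D Q / selbergMass y D ^ 2 * ramanujanAvg y b (2 ^ N) Q u f x) ≤
      2 * c * (8 ^ Q.card / modulus Q) * |ramanujanAvg y b (2 ^ N) Q u f x| := by
    refine le_trans ?_ (mul_le_mul_of_nonneg_right (totient_div_mul_abs_selbergSqCoeff_div_sq_le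
      hy.ne' hD hlog hc (mem_siftingSets.1 hQ).1.prime) (abs_nonneg _))
    rw [mul_assoc _ (|_| / _), ← abs_of_nonneg (sq_nonneg (selbergMass y D)), ← abs_div, ← abs_mul,
      abs_of_nonneg (sq_nonneg (selbergMass y D))]
    exact mul_le_mul_of_nonneg_left (le_abs_self _) (by positivity)
  calc groupPavg y b (2 ^ N) u f x
      ≤ (Nat.totient y : ℝ) / 2 ^ N * (Real.log (2 ^ N) * (shiftSum (progression (2 ^ N) y b)
          (fun n => (selbergSum y D n / selbergMass y D) ^ 2) u f x + powerSum D N u f x)) := by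
        rw [groupPavg, Nat.cast_pow, Nat.cast_ofNat]
        gcongr
        exact shiftSum_vonMangoldt_le (one_le_two.trans hD) u hf x
    _ = (Nat.totient y : ℝ) / y * Real.log (2 ^ N) * ((y : ℝ) / (2 ^ N : ℕ) *
          shiftSum (progression (2 ^ N) y b)
            (fun n => (selbergSum y D n / selbergMass y D) ^ 2) u f x) +
          (Nat.totient y : ℝ) / 2 ^ N * (Real.log (2 ^ N) * powerSum D N u f x) := by
        rw [Nat.cast_pow, Nat.cast_ofNat]
        field_simp
    _ ≤ _ := by
        rw [div_mul_shiftSum_selbergSum_div_sq, Finset.mul_sum]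
        refine add_le_add (Finset.sum_le_sum hterm) ?_
        gcongr
        exact Nat.totient_le y

end SelbergMajorant

/-! ### Summation over the moduli -/

section SummationOverModuli

variable {y : ℕ} {G : Type*} [AddCommGroup G] [Fintype G]

/-- Only the boundedly many small primes `p`, those with `p ^ ε < K`, contribute to the constant. -/
lemma exists_pow_card_le_modulus_rpow {K ε : ℝ} (hK : 1 ≤ K) (hε : 0 < ε) :
    ∃ C : ℝ, 1 ≤ C ∧ ∀ S : Finset ℕ, (∀ p ∈ S, p.Prime) →
      K ^ S.card ≤ C * (modulus S : ℝ) ^ ε := by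
  obtain ⟨P, hP⟩ := Filter.eventually_atTop.1 (((tendsto_rpow_atTop hε).comp
    (tendsto_natCast_atTop_atTop (R := ℝ))).eventually_ge_atTop K)
  refine ⟨K ^ P, one_le_pow₀ hK, fun S hS => ?_⟩
  have hsmall : {p ∈ S | p < P}.card ≤ P :=
    (Finset.card_le_card fun _ hp => Finset.mem_range.2 (Finset.mem_filter.1 hp).2).trans_eq
      (Finset.card_range P)
  calc K ^ S.card = ∏ _p ∈ S, K := (Finset.prod_const K).symm
    _ ≤ ∏ p ∈ S, ((if p < P then K else 1) * (p : ℝ) ^ ε) := by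
      refine Finset.prod_le_prod (fun _ _ => by linarith) fun p hp => ?_
      split_ifs with h
      · have hp1 : (1 : ℝ) ≤ p := Nat.one_le_cast.2 (hS p hp).one_le
        exact le_mul_of_one_le_right (by linarith) (Real.one_le_rpow hp1 hε.le)
      · rw [one_mul]
        exact hP p (not_lt.1 h)
    _ = K ^ {p ∈ S | p < P}.card * (modulus S : ℝ) ^ ε := by
      rw [Finset.prod_mul_distrib, Real.finsetProd_rpow _ _ fun _ _ => by positivity,
        ← Finset.prod_filter, Finset.prod_const, modulus, Nat.cast_prod]
    _ ≤ _ := mul_le_mul_of_nonneg_right (pow_le_pow_right₀ hK hsmall) (by positivity)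

lemma sum_one_div_modulus_le (y Z : ℕ) :
    ∑ Q ∈ siftingSets y Z, 1 / (modulus Q : ℝ) ≤ 1 + Real.log Z := by
  calc ∑ Q ∈ siftingSets y Z, 1 / (modulus Q : ℝ) ≤ ∑ m ∈ Finset.Icc 1 Z, 1 / (m : ℝ) := by
        refine sum_le_sum_of_injOn modulus (fun Q hQ => ?_)
          (modulus_injOn.mono fun Q hQ => (mem_siftingSets.1 hQ).1.prime) (fun _ _ => le_rfl)
          fun _ _ => by positivity
        have hQ := mem_siftingSets.1 hQ
        exact Finset.mem_coe.2 (Finset.mem_Icc.2 ⟨modulus_pos hQ.1.prime, hQ.2⟩)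
    _ = harmonic Z := by simp [harmonic_eq_sum_Icc]
    _ ≤ 1 + Real.log Z := harmonic_le_one_add_log Z

lemma exists_sum_pow_card_div_modulus_le {K ε : ℝ} (hK : 1 ≤ K) (hε : 0 < ε) :
    ∃ C : ℝ, 1 ≤ C ∧ ∀ y Z : ℕ, 0 < Z →
      ∑ Q ∈ siftingSets y Z, K ^ Q.card / modulus Q ≤ C * (Z : ℝ) ^ ε := by
  have hε2 : 0 < ε / 2 := half_pos hε
  obtain ⟨C, hC1, hC⟩ := exists_pow_card_le_modulus_rpow hK hε2
  refine ⟨C * (1 + 1 / (ε / 2)),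
    one_le_mul_of_one_le_of_one_le hC1 (le_add_of_nonneg_right (by positivity)), fun y Z hZ => ?_⟩
  have hZ1 : (1 : ℝ) ≤ Z := Nat.one_le_cast.2 hZ
  have hone : 1 ≤ (Z : ℝ) ^ (ε / 2) := Real.one_le_rpow hZ1 hε2.le
  have hlog : Real.log Z ≤ (Z : ℝ) ^ (ε / 2) / (ε / 2) := Real.log_le_rpow_div (by linarith) hε2
  calc _ ≤ ∑ Q ∈ siftingSets y Z, C * (Z : ℝ) ^ (ε / 2) * (1 / modulus Q) := by
        refine Finset.sum_le_sum fun Q hQ => ?_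
        obtain ⟨hQ, hQZ⟩ := mem_siftingSets.1 hQ
        rw [mul_one_div]
        refine div_le_div_of_nonneg_right ((hC Q hQ.prime).trans ?_) (Nat.cast_nonneg _)
        gcongr
    _ ≤ C * (Z : ℝ) ^ (ε / 2) * ((Z : ℝ) ^ (ε / 2) + (Z : ℝ) ^ (ε / 2) / (ε / 2)) := by
        rw [← Finset.mul_sum]
        have hsum := sum_one_div_modulus_le y Z
        gcongr
        linarith
    _ = C * (1 + 1 / (ε / 2)) * ((Z : ℝ) ^ (ε / 2) * (Z : ℝ) ^ (ε / 2)) := by ring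
    _ = _ := by rw [← Real.rpow_add (by linarith), add_halves]

lemma sum_l2Norm_ramanujanProj_le {Y : ℕ} (hY : 0 < Y) {A : ℝ} (hA1 : 1 ≤ A)
    {s : Finset (Finset ℕ)} (hs : ∀ Q ∈ s, SiftingSet y Q)
    (hsY : ∀ Q ∈ s, modulus Q ∈ Finset.Ico Y (2 * Y)) (hA : ∀ Q ∈ s, (4 : ℝ) ^ Q.card ≤ A)
    (u : G) (f : G → ℝ) :
    ∑ Q ∈ s, l2Norm (ramanujanProj y Q u f) ≤ 2 * A * √Y * l2Norm f := by
  have hcard : (s.card : ℝ) ≤ Y :=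
    Nat.cast_le.2 (card_le_of_modulus_mem_Ico hs hsY)
  have horth := sum_l2Norm_ramanujanProj_sq_le hY (by linarith) hs hsY hA u f
  have hf := l2Norm_nonneg f
  refine le_of_sq_le_sq ?_ (by positivity)
  calc (∑ Q ∈ s, l2Norm (ramanujanProj y Q u f)) ^ 2
      ≤ s.card * ∑ Q ∈ s, l2Norm (ramanujanProj y Q u f) ^ 2 := sq_sum_le_card_mul_sum_sq
    _ ≤ Y * ((2 * A) ^ 2 * l2Norm f ^ 2) := by
        gcongr
        refine horth.trans (mul_le_mul_of_nonneg_right ?_ (sq_nonneg _))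
        nlinarith
    _ = _ := by
        rw [mul_pow (2 * A * √(Y : ℝ)), mul_pow (2 * A) √(Y : ℝ), Real.sq_sqrt (Nat.cast_nonneg Y)]
        ring

lemma mul_rpow_one_div_eight_le {C t Y : ℝ} (hC : 0 ≤ C) (ht : 0 ≤ t) (htY : t ≤ 2 * Y) :
    C * t ^ (1 / 8 : ℝ) ≤ 2 * C * Y ^ (1 / 8 : ℝ) := by
  have hY : 0 ≤ Y := by linarith
  have htwo : (2 : ℝ) ^ (1 / 8 : ℝ) ≤ 2 := Real.rpow_le_self_of_one_le one_le_two (by norm_num)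
  calc C * t ^ (1 / 8 : ℝ) ≤ C * (2 * Y) ^ (1 / 8 : ℝ) := by gcongr
    _ = 2 ^ (1 / 8 : ℝ) * C * Y ^ (1 / 8 : ℝ) := by
        rw [Real.mul_rpow zero_le_two hY]
        ring
    _ ≤ _ := by gcongr

/-- The `ℓ²` bound over a dyadic block of moduli. The loss of `modulus Q ^ (1 / 8)` in the number of
divisors is harmless against the gain of `Y ^ (1 / 2)` from almost orthogonality. -/
lemma sum_pow_card_div_modulus_mul_l2Norm_ramanujanProj_le {C : ℝ} (hC1 : 1 ≤ C)
    (hC : ∀ S : Finset ℕ, (∀ p ∈ S, p.Prime) → 16 ^ S.card ≤ C * (modulus S : ℝ) ^ (1 / 8 : ℝ))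
    {Y : ℕ} (hY : 0 < Y) {s : Finset (Finset ℕ)} (hs : ∀ Q ∈ s, SiftingSet y Q)
    (hsY : ∀ Q ∈ s, modulus Q ∈ Finset.Ico Y (2 * Y)) (u : G) (f : G → ℝ) :
    ∑ Q ∈ s, 16 ^ Q.card / modulus Q * l2Norm (ramanujanProj y Q u f) ≤
      8 * C ^ 2 * (Y : ℝ) ^ (-(1 / 4) : ℝ) * l2Norm f := by
  have hY0 : (0 : ℝ) < Y := Nat.cast_pos.2 hY
  set A : ℝ := 2 * C * (Y : ℝ) ^ (1 / 8 : ℝ)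
  have hA1 : 1 ≤ A :=
    one_le_mul_of_one_le_of_one_le (by linarith)
      (Real.one_le_rpow (Nat.one_le_cast.2 hY) (by norm_num))
  have hA (Q : Finset ℕ) (hQ : Q ∈ s) : (16 : ℝ) ^ Q.card ≤ A :=
    (hC Q (hs Q hQ).prime).trans (mul_rpow_one_div_eight_le (by linarith) (Nat.cast_nonneg _)
      (by exact_mod_cast (Finset.mem_Ico.1 (hsY Q hQ)).2.le))
  have hA4 (Q : Finset ℕ) (hQ : Q ∈ s) : (4 : ℝ) ^ Q.card ≤ A :=
    (pow_le_pow_left₀ (by norm_num) (by norm_num) _).trans (hA Q hQ)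
  have hpow : (Y : ℝ) ^ (1 / 8 : ℝ) * (Y : ℝ) ^ (1 / 8 : ℝ) * √Y / Y =
      (Y : ℝ) ^ (-(1 / 4) : ℝ) := by
    rw [Real.sqrt_eq_rpow, ← Real.rpow_add hY0, ← Real.rpow_add hY0, ← Real.rpow_sub_one hY0.ne']
    norm_num
  calc _ ≤ ∑ Q ∈ s, A / Y * l2Norm (ramanujanProj y Q u f) := by
        refine Finset.sum_le_sum fun Q hQ => ?_
        have hYQ : (Y : ℝ) ≤ modulus Q := Nat.cast_le.2 (Finset.mem_Ico.1 (hsY Q hQ)).1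
        have := l2Norm_nonneg (ramanujanProj y Q u f)
        gcongr
        exact hA Q hQ
    _ ≤ A / Y * (2 * A * √Y * l2Norm f) := by
        rw [← Finset.mul_sum]
        gcongr
        exact sum_l2Norm_ramanujanProj_le hY hA1 hs hsY hA4 u f
    _ = 8 * C ^ 2 * ((Y : ℝ) ^ (1 / 8 : ℝ) * (Y : ℝ) ^ (1 / 8 : ℝ) * √Y / Y) * l2Norm f := by ring
    _ = _ := by rw [hpow]

lemma sum_Ico_two_pow_rpow_le (J M : ℕ) :
    ∑ j ∈ Finset.Ico J M, ((2 : ℝ) ^ j) ^ (-(1 / 4) : ℝ) ≤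
      8 * ((2 : ℝ) ^ J) ^ (-(1 / 4) : ℝ) := by
  have hpow (j : ℕ) : ((2 : ℝ) ^ j) ^ (-(1 / 4) : ℝ) = ((2 : ℝ) ^ (-(1 / 4) : ℝ)) ^ j := by
    rw [← Real.rpow_natCast, ← Real.rpow_natCast, ← Real.rpow_mul zero_le_two,
      ← Real.rpow_mul zero_le_two, mul_comm]
  set ρ : ℝ := (2 : ℝ) ^ (-(1 / 4) : ℝ)
  have hρ0 : 0 ≤ ρ := by positivity
  have hρ : ρ ≤ 7 / 8 := by
    refine le_of_pow_le_pow_left₀ (n := 4) (by norm_num) (by norm_num) ?_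
    rw [← hpow, ← Real.rpow_natCast, ← Real.rpow_mul zero_le_two]
    norm_num
  simp only [hpow]
  calc _ ≤ ρ ^ J / (1 - ρ) := geom_sum_Ico_le_of_lt_one hρ0 (by linarith)
    _ ≤ ρ ^ J / (1 / 8) := by
        gcongr
        linarith
    _ = _ := by ring

lemma sum_large_modulus_mul_l2Norm_ramanujanProj_le {C : ℝ} (hC1 : 1 ≤ C)
    (hC : ∀ S : Finset ℕ, (∀ p ∈ S, p.Prime) → 16 ^ S.card ≤ C * (modulus S : ℝ) ^ (1 / 8 : ℝ))
    (y J W : ℕ) (u : G) (f : G → ℝ) :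
    ∑ Q ∈ siftingSets y W with 2 ^ J ≤ modulus Q,
        16 ^ Q.card / modulus Q * l2Norm (ramanujanProj y Q u f) ≤
      64 * C ^ 2 * ((2 : ℝ) ^ J) ^ (-(1 / 4) : ℝ) * l2Norm f := by
  set s := {Q ∈ siftingSets y W | 2 ^ J ≤ modulus Q}
  have hs (Q : Finset ℕ) (hQ : Q ∈ s) : SiftingSet y Q :=
    (mem_siftingSets.1 (Finset.mem_filter.1 hQ).1).1
  have hlog (Q : Finset ℕ) (hQ : Q ∈ s) :
      Nat.log 2 (modulus Q) ∈ Finset.Ico J (Nat.log 2 W + 1) := by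
    obtain ⟨hQW, hJQ⟩ := Finset.mem_filter.1 hQ
    exact Finset.mem_Ico.2 ⟨Nat.le_log_of_pow_le one_lt_two hJQ,
      Nat.lt_succ_of_le (Nat.log_mono_right (mem_siftingSets.1 hQW).2)⟩
  have hf := l2Norm_nonneg f
  calc _ = ∑ j ∈ Finset.Ico J (Nat.log 2 W + 1), ∑ Q ∈ s with Nat.log 2 (modulus Q) = j,
        16 ^ Q.card / modulus Q * l2Norm (ramanujanProj y Q u f) :=
        (Finset.sum_fiberwise_of_maps_to hlog _).symm
    _ ≤ ∑ j ∈ Finset.Ico J (Nat.log 2 W + 1),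
        8 * C ^ 2 * ((2 : ℝ) ^ j) ^ (-(1 / 4) : ℝ) * l2Norm f := by
        refine Finset.sum_le_sum fun j _ => ?_
        refine (sum_pow_card_div_modulus_mul_l2Norm_ramanujanProj_le (Y := 2 ^ j) hC1 hC
          (by positivity) (fun Q hQ => hs Q (Finset.mem_filter.1 hQ).1) (fun Q hQ => ?_) u
          f).trans_eq (by rw [Nat.cast_pow, Nat.cast_ofNat])
        obtain ⟨hQ, hj⟩ := Finset.mem_filter.1 hQ
        have hQ0 := (modulus_pos (hs Q hQ).prime).ne'
        rw [Nat.log_eq_iff (Or.inr ⟨one_lt_two, hQ0⟩), pow_succ'] at hj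
        exact Finset.mem_Ico.2 hj
    _ ≤ 8 * C ^ 2 * (8 * ((2 : ℝ) ^ J) ^ (-(1 / 4) : ℝ)) * l2Norm f := by
        rw [← Finset.sum_mul, ← Finset.mul_sum]
        gcongr
        exact sum_Ico_two_pow_rpow_le _ _
    _ = _ := by ring

end SummationOverModuli

/-! ### Level sets -/

section LevelSets

variable {X ι : Type*} [Fintype X]

lemma card_lt_le_sum_rpow_div {g : X → ℝ} {p t : ℝ} (hp : 0 ≤ p) (hg : ∀ x, 0 ≤ g x) (ht : 0 < t) :
    (({x | t < g x} : Finset X).card : ℝ) ≤ (∑ x, g x ^ p) / t ^ p := by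
  rw [le_div_iff₀ (by positivity), ← nsmul_eq_mul]
  exact (Finset.card_nsmul_le_sum _ (fun x => g x ^ p) _ fun x hx =>
      Real.rpow_le_rpow ht.le (Finset.mem_filter.1 hx).2.le hp).trans
    (Finset.sum_le_univ_sum_of_nonneg fun x => Real.rpow_nonneg (hg x) p)

lemma card_lt_add_le (f g : X → ℝ) (s t : ℝ) :
    ({x | s + t < f x + g x} : Finset X).card ≤
      ({x | s < f x} : Finset X).card + ({x | t < g x} : Finset X).card := by
  refine (Finset.card_le_card fun x hx => ?_).trans (Finset.card_union_le _ _)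
  have hx : s + t < f x + g x := (Finset.mem_filter.1 hx).2
  by_contra! h
  simp only [Finset.mem_union, Finset.mem_filter, Finset.mem_univ, true_and, not_or, not_lt] at h
  linarith

lemma sum_rpow_sum_mul_le {s : Finset ι} {c : ι → ℝ} {g : ι → X → ℝ} {p A : ℝ} (hp : 1 ≤ p)
    (hc : ∀ i, 0 ≤ c i) (hg : ∀ i x, 0 ≤ g i x) (hA : ∀ i ∈ s, ∑ x, g i x ^ p ≤ A) :
    ∑ x, (∑ i ∈ s, c i * g i x) ^ p ≤ (∑ i ∈ s, c i) ^ p * A := by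
  set S := ∑ i ∈ s, c i
  have hS : 0 ≤ S := Finset.sum_nonneg fun i _ => hc i
  have hjensen (x : X) : (∑ i ∈ s, c i * g i x) ^ p ≤ S ^ (p - 1) * ∑ i ∈ s, c i * g i x ^ p := by
    have hp0 : p ≠ 0 := by linarith
    have hsum : 0 ≤ ∑ i ∈ s, c i * g i x ^ p :=
      Finset.sum_nonneg fun i _ => mul_nonneg (hc i) (Real.rpow_nonneg (hg i x) p)
    refine (Real.rpow_le_rpow (Finset.sum_nonneg fun i _ => mul_nonneg (hc i) (hg i x))
      (Real.inner_le_weight_mul_Lp_of_nonneg s hp c (g · x) hc (hg · x)) (by linarith)).trans_eq ?_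
    rw [Real.mul_rpow (Real.rpow_nonneg hS _) (Real.rpow_nonneg hsum _),
      Real.rpow_inv_rpow hsum hp0, ← Real.rpow_mul hS, sub_mul, one_mul, inv_mul_cancel₀ hp0]
  calc _ ≤ ∑ x, S ^ (p - 1) * ∑ i ∈ s, c i * g i x ^ p := Finset.sum_le_sum fun x _ => hjensen x
    _ = S ^ (p - 1) * ∑ i ∈ s, c i * ∑ x, g i x ^ p := by
      rw [← Finset.mul_sum, Finset.sum_comm]
      simp only [Finset.mul_sum]
    _ ≤ S ^ (p - 1) * ∑ i ∈ s, c i * A := by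
      gcongr with i hi
      · exact hc i
      · exact hA i hi
    _ = S ^ p * A := by
      rw [← Finset.sum_mul, ← mul_assoc, ← Real.rpow_add_one' hS (by linarith), sub_add_cancel]

end LevelSets

/-! ### Splitting the majorant by the size of the modulus -/

section Splitting

variable {G : Type*} [AddCommGroup G]

/-- The sifting level used for averages of length `2 ^ n`; the exponent `1 / 40` makes the errors of
the replacement by `ramanujanProj` summable. -/
def level (n : ℕ) : ℕ := 2 ^ (n / 40)

/-- The weight of the Ramanujan sum of `Q` in the majorant with sifting level `level n`, where
`160 = 2 * 80` comes from `log (2 ^ n) ≤ 80 * log (level n)`. -/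
def majorantWeight (Q : Finset ℕ) : ℝ := 160 * (8 ^ Q.card / modulus Q)

/-- The contribution of the moduli at most `Z` to the majorant of the prime averages. -/
def lowPart (y : ℕ) (b : ℤ) (B Z : ℕ) (u : G) (f : G → ℝ) (x : G) : ℝ :=
  ∑ Q ∈ siftingSets y Z, majorantWeight Q * modMax y b B Q u f x

/-- The contribution of the moduli between `Z` and `W` to the majorant of the prime averages, after
the replacement of `f` by its projections. -/
def highPart (y : ℕ) (b : ℤ) (B Z W : ℕ) (u : G) (f : G → ℝ) (x : G) : ℝ :=
  ∑ Q ∈ siftingSets y W with Z ≤ modulus Q,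
    majorantWeight Q * modMax y b B Q u (ramanujanProj y Q u f) x

/-- The error of the replacement by the projections for moduli at most `W` and averages of length
`N`. -/
def edgePart (y N W : ℕ) (u : G) (f : G → ℝ) (x : G) : ℝ :=
  ∑ Q ∈ siftingSets y W, majorantWeight Q *
    (y * modulus Q ^ 2 / N * edgeSum (y * projLength Q) N u f x)

/-- The total error for averages of length `2 ^ n`, including that of the prime powers. -/
def errPart (y n : ℕ) (u : G) (f : G → ℝ) (x : G) : ℝ :=
  edgePart y (2 ^ n) (level n * level n) u f x +
    y / 2 ^ n * (Real.log (2 ^ n) * powerSum (level n) n u f x)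

lemma majorantWeight_nonneg (Q : Finset ℕ) : 0 ≤ majorantWeight Q := by
  unfold majorantWeight
  positivity

lemma edgePart_nonneg {f : G → ℝ} (hf : ∀ x, 0 ≤ f x) (y N W : ℕ) (u x : G) :
    0 ≤ edgePart y N W u f x :=
  Finset.sum_nonneg fun Q _ => mul_nonneg (majorantWeight_nonneg Q)
    (mul_nonneg (by positivity) (edgeSum_nonneg hf _ N u x))

lemma errPart_nonneg {f : G → ℝ} (hf : ∀ x, 0 ≤ f x) (y n : ℕ) (u x : G) :
    0 ≤ errPart y n u f x :=
  have hlog : 0 ≤ Real.log (2 ^ n) := Real.log_nonneg (one_le_pow₀ one_le_two)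
  add_nonneg (edgePart_nonneg hf y _ _ u x)
    (mul_nonneg (by positivity) (mul_nonneg hlog (powerSum_nonneg hf _ n u x)))

lemma sum_majorantWeight_mul_abs_ramanujanAvg_le_lowPart {y N B W : ℕ} (hy : 0 < y) (b : ℤ)
    (hN : y * W ≤ N) (hNB : N ≤ B) (Z : ℕ) (u : G) (f : G → ℝ) (x : G) :
    ∑ Q ∈ siftingSets y W with ¬ Z ≤ modulus Q,
      majorantWeight Q * |ramanujanAvg y b N Q u f x| ≤ lowPart y b B Z u f x := by
  have hsub : {Q ∈ siftingSets y W | ¬ Z ≤ modulus Q} ⊆ siftingSets y Z := fun Q hQ =>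
    have ⟨hQ, hQZ⟩ := Finset.mem_filter.1 hQ
    mem_siftingSets.2 ⟨(mem_siftingSets.1 hQ).1, (not_le.1 hQZ).le⟩
  refine (Finset.sum_le_sum fun Q hQ => mul_le_mul_of_nonneg_left ?_
    (majorantWeight_nonneg Q)).trans (Finset.sum_le_sum_of_subset_of_nonneg hsub fun Q _ _ =>
      mul_nonneg (majorantWeight_nonneg Q) (modMax_nonneg y b B Q u f x))
  obtain ⟨hQ, hQW⟩ := mem_siftingSets.1 (Finset.mem_filter.1 hQ).1
  exact abs_ramanujanAvg_le_modMax hy hQ ((Nat.mul_le_mul_left y hQW).trans hN) hNB u f x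

lemma sum_majorantWeight_mul_abs_ramanujanAvg_le_highPart_add_edgePart {y N B W W' : ℕ}
    (hy : 0 < y) (b : ℤ) (hN : y * W ≤ N) (hNB : N ≤ B) (hW : W ≤ W') (Z : ℕ) (u : G)
    {f : G → ℝ} (hf : ∀ x, 0 ≤ f x) (x : G) :
    ∑ Q ∈ siftingSets y W with Z ≤ modulus Q,
      majorantWeight Q * |ramanujanAvg y b N Q u f x| ≤
    highPart y b B Z W' u f x + edgePart y N W u f x := by
  set s := {Q ∈ siftingSets y W | Z ≤ modulus Q}
  set edge := fun Q : Finset ℕ => y * modulus Q ^ 2 / N * edgeSum (y * projLength Q) N u f x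
  have hreplace (Q : Finset ℕ) (hQ : Q ∈ s) : |ramanujanAvg y b N Q u f x| ≤
      modMax y b B Q u (ramanujanProj y Q u f) x + edge Q := by
    obtain ⟨hQ, hQW⟩ := mem_siftingSets.1 (Finset.mem_filter.1 hQ).1
    exact tsub_le_iff_left.1 (((sub_le_sub_left (abs_ramanujanAvg_le_modMax hy hQ
      ((Nat.mul_le_mul_left y hQW).trans hN) hNB u _ x) _).trans (abs_sub_abs_le_abs_sub _ _)).trans
      (abs_ramanujanAvg_sub_ramanujanProj_le b hQ N u hf x))
  calc _ ≤ ∑ Q ∈ s, majorantWeight Q * modMax y b B Q u (ramanujanProj y Q u f) x +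
        ∑ Q ∈ s, majorantWeight Q * edge Q := by
        rw [← Finset.sum_add_distrib]
        refine Finset.sum_le_sum fun Q hQ => ?_
        rw [← mul_add]
        exact mul_le_mul_of_nonneg_left (hreplace Q hQ) (majorantWeight_nonneg Q)
    _ ≤ _ := by
        refine add_le_add ?_ ?_
        · exact Finset.sum_le_sum_of_subset_of_nonneg
            (Finset.filter_subset_filter _ (siftingSets_mono hW)) fun Q _ _ =>
            mul_nonneg (majorantWeight_nonneg Q) (modMax_nonneg y b B Q u _ x)
        · exact Finset.sum_le_sum_of_subset_of_nonneg (Finset.filter_subset _ _) fun Q _ _ =>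
            mul_nonneg (majorantWeight_nonneg Q)
              (mul_nonneg (by positivity) (edgeSum_nonneg hf _ N u x))

lemma level_mono : Monotone level := fun _ _ h =>
  Nat.pow_le_pow_right two_pos (Nat.div_le_div_right h)

lemma log_two_pow_le_mul_log_level {n : ℕ} (hn : 40 ≤ n) :
    Real.log (2 ^ n) ≤ 80 * Real.log (level n) := by
  rw [level, Nat.cast_pow, Nat.cast_ofNat, Real.log_pow, Real.log_pow, ← mul_assoc]
  exact mul_le_mul_of_nonneg_right (by exact_mod_cast (by lia : n ≤ 80 * (n / 40)))
    (Real.log_nonneg one_le_two)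

lemma mul_level_mul_level_le_two_pow {y n : ℕ} (hyn : 2 * y ≤ n) :
    y * (level n * level n) ≤ 2 ^ n :=
  calc y * (level n * level n) ≤ 2 ^ y * 2 ^ (n / 40 + n / 40) := by
        rw [pow_add]
        exact Nat.mul_le_mul_right _ Nat.lt_two_pow_self.le
    _ = 2 ^ (y + (n / 40 + n / 40)) := (pow_add _ _ _).symm
    _ ≤ 2 ^ n := Nat.pow_le_pow_right two_pos (by lia)

lemma groupPavg_le_lowPart_add_highPart_add_errPart {y n m : ℕ} (hy : 0 < y) (hn : 40 ≤ n)
    (hyn : 2 * y ≤ n) (hnm : n ≤ m) (b : ℤ) (Z : ℕ) (u : G) {f : G → ℝ} (hf : ∀ x, 0 ≤ f x)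
    (x : G) :
    groupPavg y b (2 ^ n) u f x ≤ lowPart y b (2 ^ m) Z u f x +
      highPart y b (2 ^ m) Z (level m * level m) u f x + errPart y n u f x := by
  have hlevel : 2 ≤ level n := Nat.le_self_pow (by lia) 2
  have hB : 2 ^ n ≤ 2 ^ m := Nat.pow_le_pow_right two_pos hnm
  have hW := mul_level_mul_level_le_two_pow hyn
  have hlow := sum_majorantWeight_mul_abs_ramanujanAvg_le_lowPart hy b hW hB Z u f x
  have hhigh := sum_majorantWeight_mul_abs_ramanujanAvg_le_highPart_add_edgePart hy b hW hB
    (Nat.mul_le_mul (level_mono hnm) (level_mono hnm)) Z u hf x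
  have hsieve := groupPavg_le hy hlevel (log_two_pow_le_mul_log_level hn) b u hf x
  rw [← Finset.sum_filter_not_add_sum_filter _ fun Q => Z ≤ modulus Q] at hsieve
  norm_num only at hsieve
  unfold errPart
  unfold majorantWeight at hlow hhigh
  linarith

end Splitting

section LowAndHighModuli

variable {G : Type*} [AddCommGroup G] [Fintype G]

lemma two_pow_card_mul_majorantWeight (Q : Finset ℕ) :
    2 ^ Q.card * majorantWeight Q = 160 * (16 ^ Q.card / modulus Q) := by
  rw [majorantWeight, show (16 : ℝ) = 2 * 8 by norm_num, mul_pow]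
  ring

/-- The left side is a combination of shifted maximal functions of `|f|` whose coefficients add up
to the sum on the right. -/
lemma sum_lowPart_rpow_le {p : ℝ} (hp : 1 < p) (y : ℕ) (b : ℤ) (B Z : ℕ) (u : G) (f : G → ℝ) :
    ∑ x, lowPart y b B Z u f x ^ p ≤
      (320 * ∑ Q ∈ siftingSets y Z, 16 ^ Q.card / (modulus Q : ℝ)) ^ p *
        ((p / (p - 1)) ^ p * ∑ x, |f x| ^ p) := by
  set g : (Σ _ : Finset ℕ, Finset ℕ) → G → ℝ := fun i x =>
    maxAvg B ((y * modulus i.2) • u) (fun z => |f z|) (x - progressionStart y b (modulus i.2) • u)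
  set s := (siftingSets y Z).sigma Finset.powerset
  have hg (i) (x : G) : 0 ≤ g i x := maxAvg_nonneg (fun _ => abs_nonneg _) _
  have hgsum (i) : ∑ x, g i x ^ p ≤ (p / (p - 1)) ^ p * ∑ x, |f x| ^ p :=
    (sum_comp_sub_right (maxAvg B _ _ · ^ p) _).trans_le
      (sum_maxAvg_rpow_le hp B _ fun _ => abs_nonneg _)
  have hlow (x : G) : lowPart y b B Z u f x = ∑ i ∈ s, majorantWeight i.1 * 2 * g i x := by
    rw [Finset.sum_sigma]
    simp only [lowPart, modMax, g, Finset.mul_sum, mul_assoc]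
  have hweight : ∑ i ∈ s, majorantWeight i.1 * 2 =
      320 * ∑ Q ∈ siftingSets y Z, 16 ^ Q.card / (modulus Q : ℝ) := by
    rw [Finset.sum_sigma, Finset.mul_sum]
    refine Finset.sum_congr rfl fun Q _ => ?_
    have := two_pow_card_mul_majorantWeight Q
    simp only [Finset.sum_const, Finset.card_powerset, nsmul_eq_mul, Nat.cast_pow, Nat.cast_ofNat]
    linarith
  simp only [hlow, ← hweight]
  exact sum_rpow_sum_mul_le hp.le (fun i => mul_nonneg (majorantWeight_nonneg _) zero_le_two) hg
    fun i _ => hgsum i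

lemma card_lt_lowPart_le {C p t : ℝ} (hC0 : 0 ≤ C) (hp : 1 < p) {y Z : ℕ}
    (hC : ∑ Q ∈ siftingSets y Z, 16 ^ Q.card / (modulus Q : ℝ) ≤ C * (Z : ℝ) ^ ((p - 1) / 2))
    (ht : 0 < t) (hZ : (Z : ℝ) ≤ 2 * t ^ (-2 : ℝ)) (b : ℤ) (B : ℕ) (u : G) {f : G → ℝ}
    (hf0 : ∀ x, 0 ≤ f x) (hf1 : ∀ x, f x ≤ 1) :
    (({x | t < lowPart y b B Z u f x} : Finset G).card : ℝ) ≤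
      (320 * C * 2 ^ ((p - 1) / 2) * (p / (p - 1))) ^ p * t ^ (-p ^ 2) * ∑ x, f x := by
  have hq : 0 ≤ p / (p - 1) := div_nonneg (by linarith) (by linarith)
  have hweight : 320 * ∑ Q ∈ siftingSets y Z, 16 ^ Q.card / (modulus Q : ℝ) ≤
      320 * C * 2 ^ ((p - 1) / 2) * t ^ (1 - p) := by
    calc _ ≤ 320 * (C * (2 * t ^ (-2 : ℝ)) ^ ((p - 1) / 2)) := by
          gcongr
          refine hC.trans (mul_le_mul_of_nonneg_left ?_ hC0)
          exact Real.rpow_le_rpow (Nat.cast_nonneg _) hZ (by linarith)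
      _ = 320 * C * 2 ^ ((p - 1) / 2) * t ^ (1 - p) := by
          rw [Real.mul_rpow zero_le_two (by positivity), ← Real.rpow_mul ht.le]
          ring_nf
  have hfp : ∑ x, |f x| ^ p ≤ ∑ x, f x := Finset.sum_le_sum fun x _ => by
    rw [abs_of_nonneg (hf0 x)]
    exact Real.rpow_le_self_of_le_one (hf0 x) (hf1 x) hp.le
  have hpow : (t ^ (1 - p)) ^ p / t ^ p = t ^ (-p ^ 2) := by
    rw [← Real.rpow_mul ht.le, ← Real.rpow_sub ht]
    ring_nf
  have hlow (x : G) : 0 ≤ lowPart y b B Z u f x :=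
    Finset.sum_nonneg fun Q _ => mul_nonneg (majorantWeight_nonneg Q) (modMax_nonneg ..)
  calc _ ≤ (∑ x, lowPart y b B Z u f x ^ p) / t ^ p :=
        card_lt_le_sum_rpow_div (by linarith) hlow ht
    _ ≤ (320 * C * 2 ^ ((p - 1) / 2) * t ^ (1 - p)) ^ p *
        ((p / (p - 1)) ^ p * ∑ x, f x) / t ^ p := by
        gcongr
        refine (sum_lowPart_rpow_le hp y b B Z u f).trans ?_
        gcongr
    _ = (320 * C * 2 ^ ((p - 1) / 2) * (p / (p - 1))) ^ p * ((t ^ (1 - p)) ^ p / t ^ p) *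
        ∑ x, f x := by
        rw [Real.mul_rpow (by positivity) (by positivity), Real.mul_rpow (by positivity) hq]
        ring
    _ = _ := by rw [hpow]

lemma l2Norm_modMax_le (y : ℕ) (b : ℤ) (B : ℕ) (Q : Finset ℕ) (u : G) (f : G → ℝ) :
    l2Norm (modMax y b B Q u f) ≤ 2 ^ Q.card * (4 * l2Norm f) := by
  calc l2Norm (modMax y b B Q u f) ≤ ∑ T ∈ Q.powerset, 4 * l2Norm f := by
        refine (l2Norm_sum_le _ _).trans (Finset.sum_le_sum fun T _ => ?_)
        have h := l2Norm_maxAvg_le B ((y * modulus T) • u) fun x => abs_nonneg (f x)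
        rw [l2Norm_abs] at h
        rw [l2Norm_const_mul, l2Norm_comp_sub_right, abs_two]
        linarith
    _ = _ := by rw [Finset.sum_const, Finset.card_powerset, nsmul_eq_mul, Nat.cast_pow,
          Nat.cast_ofNat]

lemma l2Norm_highPart_le (y : ℕ) (b : ℤ) (B Z W : ℕ) (u : G) (f : G → ℝ) :
    l2Norm (highPart y b B Z W u f) ≤ 640 * ∑ Q ∈ siftingSets y W with Z ≤ modulus Q,
      16 ^ Q.card / modulus Q * l2Norm (ramanujanProj y Q u f) := by
  rw [Finset.mul_sum]
  refine (l2Norm_sum_le _ _).trans (Finset.sum_le_sum fun Q _ => ?_)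
  rw [l2Norm_const_mul, abs_of_nonneg (majorantWeight_nonneg Q)]
  calc _ ≤ majorantWeight Q * (2 ^ Q.card * (4 * l2Norm (ramanujanProj y Q u f))) :=
        mul_le_mul_of_nonneg_left (l2Norm_modMax_le ..) (majorantWeight_nonneg Q)
    _ = 2 ^ Q.card * majorantWeight Q * 4 * l2Norm (ramanujanProj y Q u f) := by ring
    _ = _ := by
        rw [two_pow_card_mul_majorantWeight]
        ring

lemma card_lt_highPart_le {C t : ℝ} (hC1 : 1 ≤ C)
    (hC : ∀ S : Finset ℕ, (∀ p ∈ S, p.Prime) → 16 ^ S.card ≤ C * (modulus S : ℝ) ^ (1 / 8 : ℝ))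
    {J : ℕ} (ht : 0 < t) (hJ : t ^ (-2 : ℝ) ≤ 2 ^ J) (y : ℕ) (b : ℤ) (B W : ℕ) (u : G) {f : G → ℝ}
    (hf0 : ∀ x, 0 ≤ f x) (hf1 : ∀ x, f x ≤ 1) :
    (({x | t < highPart y b B (2 ^ J) W u f x} : Finset G).card : ℝ) ≤
      (640 * (64 * C ^ 2)) ^ 2 * t⁻¹ * ∑ x, f x := by
  have hnorm : l2Norm (highPart y b B (2 ^ J) W u f) ≤
      640 * (64 * C ^ 2) * ((2 : ℝ) ^ J) ^ (-(1 / 4) : ℝ) * l2Norm f := by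
    linarith [l2Norm_highPart_le y b B (2 ^ J) W u f,
      sum_large_modulus_mul_l2Norm_ramanujanProj_le hC1 hC y J W u f]
  have hgain : (((2 : ℝ) ^ J) ^ (-(1 / 4) : ℝ)) ^ 2 ≤ t := by
    calc _ ≤ ((t ^ (-2 : ℝ)) ^ (-(1 / 4) : ℝ)) ^ 2 := by
          gcongr ?_ ^ 2
          exact Real.rpow_le_rpow_of_nonpos (by positivity) hJ (by norm_num)
      _ = t := by
          rw [← Real.rpow_mul ht.le, ← Real.rpow_mul_natCast ht.le]
          norm_num
  have hfsq : l2Norm f ^ 2 ≤ ∑ x, f x := by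
    rw [l2Norm_sq]
    exact Finset.sum_le_sum fun x _ => pow_le_of_le_one (hf0 x) (hf1 x) two_ne_zero
  have hhigh (x : G) : 0 ≤ highPart y b B (2 ^ J) W u f x :=
    Finset.sum_nonneg fun Q _ => mul_nonneg (majorantWeight_nonneg Q) (modMax_nonneg ..)
  calc _ ≤ (∑ x, highPart y b B (2 ^ J) W u f x ^ (2 : ℝ)) / t ^ (2 : ℝ) :=
        card_lt_le_sum_rpow_div zero_le_two hhigh ht
    _ = l2Norm (highPart y b B (2 ^ J) W u f) ^ 2 / t ^ 2 := by simp only [Real.rpow_two, l2Norm_sq]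
    _ ≤ (640 * (64 * C ^ 2) * ((2 : ℝ) ^ J) ^ (-(1 / 4) : ℝ) * l2Norm f) ^ 2 / t ^ 2 := by
        have := l2Norm_nonneg (highPart y b B (2 ^ J) W u f)
        gcongr
    _ = (640 * (64 * C ^ 2)) ^ 2 / t ^ 2 *
        ((((2 : ℝ) ^ J) ^ (-(1 / 4) : ℝ)) ^ 2 * l2Norm f ^ 2) := by ring
    _ ≤ (640 * (64 * C ^ 2)) ^ 2 / t ^ 2 * (t * ∑ x, f x) := by gcongr
    _ = _ := by field_simp

end LowAndHighModuli

/-! ### Summing the errors -/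

section Errors

lemma level_pow_div_le (n : ℕ) : (level n : ℝ) ^ 20 / 2 ^ n ≤ √(1 / 2) ^ n := by
  have hlevel : ((level n : ℝ) ^ 20) ^ 2 ≤ 2 ^ n := by
    rw [← pow_mul, level, Nat.cast_pow, Nat.cast_ofNat, ← pow_mul]
    exact pow_le_pow_right₀ one_le_two (Nat.div_mul_le_self n 40)
  refine le_of_sq_le_sq ?_ (by positivity)
  rw [div_pow, div_le_iff₀ (by positivity), pow_right_comm √(1 / 2), Real.sq_sqrt (by norm_num)]
  calc _ ≤ (2 : ℝ) ^ n := hlevel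
    _ = (1 / 2) ^ n * (2 ^ n) ^ 2 := by
        rw [pow_right_comm, ← mul_pow]
        norm_num

lemma eight_pow_card_le_modulus_pow {Q : Finset ℕ} (hQ : ∀ p ∈ Q, p.Prime) :
    (8 : ℝ) ^ Q.card ≤ modulus Q ^ 3 := by
  have h : ((2 : ℝ) ^ Q.card) ^ 3 ≤ modulus Q ^ 3 := by
    gcongr
    exact_mod_cast two_pow_card_le_modulus hQ
  rwa [pow_right_comm, show (2 : ℝ) ^ 3 = 8 by norm_num] at h

variable {G : Type*} [AddCommGroup G] [Fintype G] {f : G → ℝ}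

lemma sum_edgePart_le (y N W : ℕ) (u : G) (hf : ∀ x, 0 ≤ f x) :
    ∑ x, edgePart y N W u f x ≤ 20480 * y ^ 2 * (W ^ 10 / N) * ∑ x, f x := by
  have hS : 0 ≤ ∑ x, f x := Finset.sum_nonneg fun x _ => hf x
  have hterm (Q : Finset ℕ) (hQ : Q ∈ siftingSets y W) : majorantWeight Q *
      (y * modulus Q ^ 2 / N * (2 * (y * projLength Q : ℕ) * ∑ x, f x)) ≤
      20480 * y ^ 2 * (W ^ 9 / N) * ∑ x, f x := by
    obtain ⟨hQ, hQW⟩ := mem_siftingSets.1 hQ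
    have hq : (0 : ℝ) < modulus Q := Nat.cast_pos.2 (modulus_pos hQ.prime)
    have h8 := eight_pow_card_le_modulus_pow hQ.prime
    calc _ = 20480 * y ^ 2 * (8 ^ Q.card * (modulus Q : ℝ) ^ 6 / N) * ∑ x, f x := by
          rw [majorantWeight, projLength]
          push_cast
          field_simp
          ring
      _ ≤ 20480 * y ^ 2 * ((modulus Q : ℝ) ^ 3 * (modulus Q : ℝ) ^ 6 / N) * ∑ x, f x := by gcongr
      _ ≤ 20480 * y ^ 2 * ((W : ℝ) ^ 3 * (W : ℝ) ^ 6 / N) * ∑ x, f x := by gcongr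
      _ = _ := by ring
  unfold edgePart
  rw [Finset.sum_comm]
  simp only [← Finset.mul_sum, sum_edgeSum]
  calc _ ≤ (siftingSets y W).card * (20480 * y ^ 2 * (W ^ 9 / N) * ∑ x, f x) := by
        rw [← nsmul_eq_mul]
        exact Finset.sum_le_card_nsmul _ _ _ hterm
    _ ≤ W * (20480 * y ^ 2 * (W ^ 9 / N) * ∑ x, f x) := by
        gcongr
        exact card_siftingSets_le y W
    _ = _ := by ring

lemma sum_errPart_le {y n : ℕ} (hy : 1 ≤ y) (hn : 1 ≤ n) (u : G) (hf : ∀ x, 0 ≤ f x) :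
    ∑ x, errPart y n u f x ≤ 20482 * y ^ 2 * (n ^ 2 * √(1 / 2) ^ n) * ∑ x, f x := by
  have hS : 0 ≤ ∑ x, f x := Finset.sum_nonneg fun x _ => hf x
  have hD : (1 : ℝ) ≤ level n := Nat.one_le_cast.2 Nat.one_le_two_pow
  have hn1 : (1 : ℝ) ≤ (n : ℝ) ^ 2 := one_le_pow₀ (Nat.one_le_cast.2 hn)
  have hlevel := level_pow_div_le n
  have hedge : ∑ x, edgePart y (2 ^ n) (level n * level n) u f x ≤
      20480 * y ^ 2 * (n ^ 2 * √(1 / 2) ^ n) * ∑ x, f x := by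
    calc _ ≤ 20480 * y ^ 2 * (1 * ((level n : ℝ) ^ 20 / 2 ^ n)) * ∑ x, f x := by
          refine (sum_edgePart_le y _ _ u hf).trans_eq ?_
          push_cast
          ring
      _ ≤ _ := by gcongr
  have hpower : y / 2 ^ n * (Real.log (2 ^ n) * ((level n + 1) * n * ∑ x, f x)) ≤
      2 * y ^ 2 * (n ^ 2 * √(1 / 2) ^ n) * ∑ x, f x := by
    have hlog : Real.log (2 ^ n) ≤ n := by
      rw [Real.log_pow]
      exact mul_le_of_le_one_right (Nat.cast_nonneg n) (Real.log_two_lt_d9.le.trans (by norm_num))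
    have hDpow : (level n : ℝ) + 1 ≤ 2 * (level n : ℝ) ^ 20 := by
      linarith [le_self_pow₀ hD (by norm_num : 20 ≠ 0)]
    have hysq : (y : ℝ) ≤ (y : ℝ) ^ 2 := le_self_pow₀ (Nat.one_le_cast.2 hy) two_ne_zero
    have hlog0 : 0 ≤ Real.log (2 ^ n) := Real.log_nonneg (one_le_pow₀ one_le_two)
    calc _ ≤ (y : ℝ) ^ 2 / 2 ^ n * (n * ((2 * (level n : ℝ) ^ 20) * n * ∑ x, f x)) := by gcongr
      _ = 2 * y ^ 2 * (n ^ 2 * ((level n : ℝ) ^ 20 / 2 ^ n)) * ∑ x, f x := by ring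
      _ ≤ _ := by gcongr
  unfold errPart
  rw [Finset.sum_add_distrib, ← Finset.mul_sum, ← Finset.mul_sum, sum_powerSum]
  linarith

lemma exists_forall_sum_Icc_le_one {a : ℕ → ℝ} (ha : Summable a) (k : ℕ) :
    ∃ n₀, k ≤ n₀ ∧ ∀ m, ∑ n ∈ Finset.Icc n₀ m, a n ≤ 1 := by
  obtain ⟨N, hN⟩ := summable_iff_nat_tsum_vanishing.1 ha (Set.Iio 1) (Iio_mem_nhds one_pos)
  refine ⟨max k N, le_max_left .., fun m => ?_⟩
  rw [← Finset.tsum_subtype']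
  exact (hN _ fun n hn => (le_max_right k N).trans (Finset.mem_Icc.1 hn).1).le

lemma exists_forall_sum_errPart_bound_le_one (y : ℕ) :
    ∃ n₀, 40 ≤ n₀ ∧ 2 * y ≤ n₀ ∧
      ∀ m, ∑ n ∈ Finset.Icc n₀ m, 20482 * (y : ℝ) ^ 2 * (n ^ 2 * √(1 / 2) ^ n) ≤ 1 := by
  have hsqrt : ‖√(1 / 2)‖ < 1 := by
    rw [Real.norm_of_nonneg (Real.sqrt_nonneg _), Real.sqrt_lt' one_pos]
    norm_num
  obtain ⟨n₀, hn₀, hsum⟩ := exists_forall_sum_Icc_le_one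
    ((summable_pow_mul_geometric_of_norm_lt_one 2 hsqrt).mul_left _) (max 40 (2 * y))
  exact ⟨n₀, (le_max_left ..).trans hn₀, (le_max_right ..).trans hn₀, hsum⟩

lemma card_lt_sum_errPart_le {y n₀ m : ℕ} {t : ℝ} (hy : 1 ≤ y) (hn₀ : 1 ≤ n₀)
    (hsum : ∑ n ∈ Finset.Icc n₀ m, 20482 * (y : ℝ) ^ 2 * (n ^ 2 * √(1 / 2) ^ n) ≤ 1) (ht : 0 < t)
    (u : G) (hf : ∀ x, 0 ≤ f x) :
    (({x | t < ∑ n ∈ Finset.Icc n₀ m, errPart y n u f x} : Finset G).card : ℝ) ≤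
      t⁻¹ * ∑ x, f x := by
  refine (card_lt_le_sum_rpow_div zero_le_one
    (fun x => Finset.sum_nonneg fun n _ => errPart_nonneg hf y n u x) ht).trans ?_
  simp only [Real.rpow_one]
  rw [div_eq_inv_mul, Finset.sum_comm]
  gcongr
  calc _ ≤ ∑ n ∈ Finset.Icc n₀ m, 20482 * (y : ℝ) ^ 2 * (n ^ 2 * √(1 / 2) ^ n) * ∑ x, f x :=
        Finset.sum_le_sum fun n hn => sum_errPart_le hy (hn₀.trans (Finset.mem_Icc.1 hn).1) u hf
    _ ≤ _ := by
        rw [← Finset.sum_mul]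
        exact mul_le_of_le_one_left (Finset.sum_nonneg fun x _ => hf x) hsum

end Errors

/-! ### The maximal inequality on finite groups -/

section GroupMaximal

variable {G : Type*} [AddCommGroup G] [Fintype G]

lemma exists_rpow_neg_two_le_two_pow {t : ℝ} (ht0 : 0 < t) (ht1 : t ≤ 1) :
    ∃ J : ℕ, t ^ (-2 : ℝ) ≤ 2 ^ J ∧ (2 : ℝ) ^ J ≤ 2 * t ^ (-2 : ℝ) := by
  obtain ⟨J, hle, hlt⟩ := exists_nat_pow_near
    (Real.one_le_rpow_of_pos_of_le_one_of_nonpos ht0 ht1 (by norm_num : (-2 : ℝ) ≤ 0)) one_lt_two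
  exact ⟨J + 1, hlt.le, by rw [pow_succ]; linarith⟩

lemma card_exists_lt_groupPavg_le_add {y n₀ m : ℕ} (hy : 0 < y) (hn₀ : 40 ≤ n₀)
    (hyn₀ : 2 * y ≤ n₀) (b : ℤ) (Z : ℕ) (u : G) {f : G → ℝ} (hf : ∀ x, 0 ≤ f x) (t : ℝ) :
    ({x | ∃ n ∈ Finset.Icc n₀ m, t + t + t < groupPavg y b (2 ^ n) u f x} : Finset G).card ≤
      ({x | t < lowPart y b (2 ^ m) Z u f x} : Finset G).card +
      ({x | t < highPart y b (2 ^ m) Z (level m * level m) u f x} : Finset G).card +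
      ({x | t < ∑ n ∈ Finset.Icc n₀ m, errPart y n u f x} : Finset G).card := by
  refine (Finset.card_le_card fun x hx => ?_).trans ((card_lt_add_le _ _ (t + t) t).trans
    (Nat.add_le_add_right (card_lt_add_le _ _ t t) _))
  obtain ⟨n, hn, hx⟩ := (Finset.mem_filter.1 hx).2
  obtain ⟨hn₀n, hnm⟩ := Finset.mem_Icc.1 hn
  have hsplit := groupPavg_le_lowPart_add_highPart_add_errPart hy (hn₀.trans hn₀n)
    (hyn₀.trans hn₀n) hnm b Z u hf x
  have herr : errPart y n u f x ≤ ∑ n ∈ Finset.Icc n₀ m, errPart y n u f x :=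
    Finset.single_le_sum (f := fun n => errPart y n u f x)
      (fun n _ => errPart_nonneg hf y n u x) hn
  exact Finset.mem_filter.2 ⟨Finset.mem_univ x, by linarith⟩

lemma card_exists_lt_groupPavg_le {C₁ C₂ p t : ℝ} {y n₀ m : ℕ} (hp : 1 < p) (hC₁ : 1 ≤ C₁)
    (hlow : ∀ Z : ℕ, 0 < Z →
      ∑ Q ∈ siftingSets y Z, 16 ^ Q.card / (modulus Q : ℝ) ≤ C₁ * (Z : ℝ) ^ ((p - 1) / 2))
    (hC₂ : 1 ≤ C₂)
    (hhigh : ∀ S : Finset ℕ, (∀ p ∈ S, p.Prime) →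
      16 ^ S.card ≤ C₂ * (modulus S : ℝ) ^ (1 / 8 : ℝ))
    (hy : 1 ≤ y) (hn₀ : 40 ≤ n₀) (hyn₀ : 2 * y ≤ n₀)
    (herr : ∑ n ∈ Finset.Icc n₀ m, 20482 * (y : ℝ) ^ 2 * (n ^ 2 * √(1 / 2) ^ n) ≤ 1)
    (ht0 : 0 < t) (ht1 : t ≤ 1) (b : ℤ) (u : G) {f : G → ℝ} (hf0 : ∀ x, 0 ≤ f x)
    (hf1 : ∀ x, f x ≤ 1) :
    (({x | ∃ n ∈ Finset.Icc n₀ m, t + t + t < groupPavg y b (2 ^ n) u f x} :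
        Finset G).card : ℝ) ≤
      ((320 * C₁ * 2 ^ ((p - 1) / 2) * (p / (p - 1))) ^ p + (640 * (64 * C₂ ^ 2)) ^ 2 + 1) *
        t ^ (-p ^ 2) * ∑ x, f x := by
  obtain ⟨J, hJ, hJ'⟩ := exists_rpow_neg_two_le_two_pow ht0 ht1
  have hlow_card := card_lt_lowPart_le (by linarith) hp (hlow (2 ^ J) (by positivity)) ht0
    (by exact_mod_cast hJ') b (2 ^ m) u hf0 hf1
  have hhigh_card := card_lt_highPart_le hC₂ hhigh ht0 hJ y b (2 ^ m) (level m * level m) u hf0 hf1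
  have herr_card := card_lt_sum_errPart_le hy (by lia) herr ht0 u hf0
  have hinv : t⁻¹ ≤ t ^ (-p ^ 2) := by
    rw [← Real.rpow_neg_one]
    exact Real.rpow_le_rpow_of_exponent_ge ht0 ht1 (neg_le_neg (one_le_pow₀ hp.le))
  have hS : 0 ≤ ∑ x, f x := Finset.sum_nonneg fun x _ => hf0 x
  calc _ ≤ (({x | t < lowPart y b (2 ^ m) (2 ^ J) u f x} : Finset G).card : ℝ) +
        ({x | t < highPart y b (2 ^ m) (2 ^ J) (level m * level m) u f x} : Finset G).card +
        ({x | t < ∑ n ∈ Finset.Icc n₀ m, errPart y n u f x} : Finset G).card := by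
        exact_mod_cast card_exists_lt_groupPavg_le_add hy hn₀ hyn₀ b (2 ^ J) u hf0 t
    _ ≤ (320 * C₁ * 2 ^ ((p - 1) / 2) * (p / (p - 1))) ^ p * t ^ (-p ^ 2) * ∑ x, f x +
        (640 * (64 * C₂ ^ 2)) ^ 2 * t ^ (-p ^ 2) * ∑ x, f x + t ^ (-p ^ 2) * ∑ x, f x := by
        refine add_le_add (add_le_add hlow_card (hhigh_card.trans ?_)) (herr_card.trans ?_) <;>
          gcongr
    _ = _ := by ring

end GroupMaximal

/-! ### Transference to the integers -/

section Transference

lemma exists_injOn_intCast_zmod (X : Finset ℤ) :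
    ∃ M : ℕ, M ≠ 0 ∧ Set.InjOn (fun x : ℤ => (x : ZMod M)) X := by
  refine ⟨2 * X.sup Int.natAbs + 1, by lia, fun x hx z hz h => ?_⟩
  have hx : x.natAbs ≤ X.sup Int.natAbs := Finset.le_sup hx
  have hz : z.natAbs ≤ X.sup Int.natAbs := Finset.le_sup hz
  have := Int.eq_zero_of_abs_lt_dvd ((ZMod.intCast_eq_intCast_iff_dvd_sub _ _ _).1 h)
    (by rw [abs_lt]; push_cast; lia)
  lia

/-- The image of `f`, restricted to the finite set `W`, under reduction modulo `M`. -/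
def pushZMod (M : ℕ) (W : Finset ℤ) (f : ℤ → ℝ) (z : ZMod M) : ℝ :=
  ∑ w ∈ W with ((w : ℤ) : ZMod M) = z, f w

variable {M : ℕ} {W : Finset ℤ} {f : ℤ → ℝ}

lemma pushZMod_nonneg (hf : ∀ x, 0 ≤ f x) (z : ZMod M) : 0 ≤ pushZMod M W f z :=
  Finset.sum_nonneg fun w _ => hf w

lemma le_pushZMod (hf : ∀ x, 0 ≤ f x) {w : ℤ} (hw : w ∈ W) : f w ≤ pushZMod M W f w :=
  Finset.single_le_sum (fun w _ => hf w) (Finset.mem_filter.2 ⟨hw, rfl⟩)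

lemma pushZMod_le_one (hinj : Set.InjOn (fun w : ℤ => (w : ZMod M)) W) (hf : ∀ x, f x ≤ 1)
    (z : ZMod M) : pushZMod M W f z ≤ 1 := by
  have hcard : ({w ∈ W | ((w : ℤ) : ZMod M) = z}).card ≤ 1 := Finset.card_le_one.2 fun v hv w hw =>
    have ⟨hvW, hv⟩ := Finset.mem_filter.1 hv
    have ⟨hwW, hw⟩ := Finset.mem_filter.1 hw
    hinj hvW hwW (hv.trans hw.symm)
  refine (Finset.sum_le_card_nsmul _ _ 1 fun w _ => hf w).trans ?_
  rw [nsmul_one]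
  exact_mod_cast hcard

lemma sum_pushZMod [NeZero M] (W : Finset ℤ) (f : ℤ → ℝ) :
    ∑ z, pushZMod M W f z = ∑ w ∈ W, f w :=
  Finset.sum_fiberwise W (fun w : ℤ => (w : ZMod M)) f

lemma pavg_le_groupPavg_pushZMod (hf : ∀ x, 0 ≤ f x) {N : ℕ} {x : ℤ}
    (hW : ∀ n < N, x - n ∈ W) (y : ℕ) (b : ℤ) :
    pavg N y b f x ≤ groupPavg y b N (1 : ZMod M) (pushZMod M W f) x := by
  unfold pavg groupPavg shiftSum
  refine mul_le_mul_of_nonneg_left (Finset.sum_le_sum fun n hn => mul_le_mul_of_nonneg_left ?_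
    ArithmeticFunction.vonMangoldt_nonneg) (by positivity)
  have h := le_pushZMod (M := M) hf (hW n (Finset.mem_range.1 (Finset.mem_filter.1 hn).1))
  simpa using h

lemma exists_card_le_mul_sum_of_lt_pavg {K t : ℝ} {y n₀ : ℕ} {b : ℤ}
    (hgroup : ∀ (M : ℕ) [NeZero M] (m : ℕ) (g : ZMod M → ℝ), (∀ z, 0 ≤ g z) → (∀ z, g z ≤ 1) →
      (({z | ∃ n ∈ Finset.Icc n₀ m, t < groupPavg y b (2 ^ n) 1 g z} : Finset (ZMod M)).card : ℝ) ≤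
        K * ∑ z, g z)
    (hf0 : ∀ x, 0 ≤ f x) (hf1 : ∀ x, f x ≤ 1) {X : Finset ℤ}
    (hX : ∀ x ∈ X, ∃ n, n₀ ≤ n ∧ t < pavg (2 ^ n) y b f x) :
    ∃ W : Finset ℤ, X.card ≤ K * ∑ w ∈ W, f w := by
  choose! k hk hlt using hX
  set W := X.biUnion fun x => (Finset.range (2 ^ k x)).image fun n : ℕ => x - n
  have hW (x : ℤ) (hx : x ∈ X) (n : ℕ) (hn : n < 2 ^ k x) : x - n ∈ W :=
    Finset.mem_biUnion.2 ⟨x, hx, Finset.mem_image_of_mem _ (Finset.mem_range.2 hn)⟩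
  obtain ⟨M, hM, hinj⟩ := exists_injOn_intCast_zmod (X ∪ W)
  have : NeZero M := ⟨hM⟩
  rw [Finset.coe_union] at hinj
  refine ⟨W, ?_⟩
  calc (X.card : ℝ) ≤ _ := Nat.cast_le.2 (Finset.card_le_card_of_injOn _ (fun x hx =>
        Finset.mem_coe.2 (Finset.mem_filter.2 ⟨Finset.mem_univ _, k x,
          Finset.mem_Icc.2 ⟨hk x hx, Finset.le_sup hx⟩,
          (hlt x hx).trans_le (pavg_le_groupPavg_pushZMod hf0 (hW x hx) y b)⟩))
        (hinj.mono Set.subset_union_left))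
    _ ≤ K * ∑ z, pushZMod M W f z := hgroup M (X.sup k) _ (pushZMod_nonneg hf0)
        (pushZMod_le_one (hinj.mono Set.subset_union_right) hf1)
    _ = _ := by rw [sum_pushZMod]

lemma tsum_ite_le_of_forall_card_le {α : Type*} {P : α → Prop} {f : α → ℝ} {K : ℝ} (hK : 0 ≤ K)
    (hf : ∀ x, 0 ≤ f x)
    (h : ∀ X : Finset α, (∀ x ∈ X, P x) → ∃ W : Finset α, X.card ≤ K * ∑ w ∈ W, f w) :
    ∑' x, (if P x then (1 : ℝ≥0∞) else 0) ≤ ENNReal.ofReal K * ∑' x, ENNReal.ofReal (f x) := by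
  rw [ENNReal.tsum_eq_iSup_sum]
  refine iSup_le fun X => ?_
  obtain ⟨W, hW⟩ := h {x ∈ X | P x} fun x hx => (Finset.mem_filter.1 hx).2
  rw [Finset.sum_boole, ← ENNReal.ofReal_natCast]
  calc _ ≤ ENNReal.ofReal (K * ∑ w ∈ W, f w) := ENNReal.ofReal_le_ofReal hW
    _ = ENNReal.ofReal K * ∑ w ∈ W, ENNReal.ofReal (f w) := by
        rw [ENNReal.ofReal_mul hK, ENNReal.ofReal_sum_of_nonneg fun w _ => hf w]
    _ ≤ _ := by
        gcongr
        exact ENNReal.sum_le_tsum W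

lemma ite_one_zero_mono {P Q : Prop} (h : P → Q) :
    (if P then (1 : ℝ≥0∞) else 0) ≤ if Q then 1 else 0 := by
  split_ifs with hP hQ hQ
  exacts [le_rfl, (hQ (h hP)).elim, zero_le_one, le_rfl]

lemma tsum_ofReal_ite_mem {α : Type*} [DecidableEq α] (F : Finset α) :
    ∑' x, ENNReal.ofReal (if x ∈ F then (1 : ℝ) else 0) = F.card := by
  rw [tsum_eq_sum fun x hx => by rw [if_neg hx, ENNReal.ofReal_zero],
    Finset.sum_congr rfl fun x hx => by rw [if_pos hx, ENNReal.ofReal_one], Finset.sum_const,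
    nsmul_one]

end Transference

theorem weak_type_maximal_estimate_general {r : ℝ} (hr : 1 < r) :
    ∃ C : ℝ, 0 < C ∧ ∀ y : ℕ, 1 ≤ y → ∃ Nry : ℕ, ∀ (b : ℤ) (f : ℤ → ℝ), (∀ x, 0 ≤ f x) →
      (∀ x, f x ≤ 1) → ∀ lam : ℝ, 0 < lam → lam < 1 →
        ∑' x : ℤ, (if ∃ n : ℕ, (Nry : ℝ) < 2 ^ n ∧ lam < pavg (2 ^ n) y b f x
            then (1 : ℝ≥0∞) else 0) ≤
          ENNReal.ofReal (C * lam ^ (-r)) * ∑' x, ENNReal.ofReal (f x) := by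
  have hp : 1 < √r := Real.lt_sqrt_of_sq_lt (by rwa [one_pow])
  have hpsq : √r ^ 2 = r := Real.sq_sqrt (by linarith)
  have hq : 0 < √r - 1 := sub_pos.2 hp
  obtain ⟨C₁, hC₁, hlow⟩ := exists_sum_pow_card_div_modulus_le (K := 16) (by norm_num) (half_pos hq)
  obtain ⟨C₂, hC₂, hhigh⟩ := exists_pow_card_le_modulus_rpow (K := 16) (ε := 1 / 8) (by norm_num)
    (by norm_num)
  set A := (320 * C₁ * 2 ^ ((√r - 1) / 2) * (√r / (√r - 1))) ^ √r + (640 * (64 * C₂ ^ 2)) ^ 2 + 1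
  have : 0 < A := by positivity
  refine ⟨A * 3 ^ r, by positivity, fun y hy => ?_⟩
  obtain ⟨n₀, hn₀, hyn₀, herr⟩ := exists_forall_sum_errPart_bound_le_one y
  refine ⟨2 ^ n₀, fun b f hf0 hf1 lam h0 h1 => tsum_ite_le_of_forall_card_le (by positivity) hf0 ?_⟩
  intro X hX
  refine exists_card_le_mul_sum_of_lt_pavg (t := lam) (y := y) (n₀ := n₀) (b := b)
    (fun M _ m g hg0 hg1 => ?_) hf0 hf1 fun x hx => ?_
  · have h := card_exists_lt_groupPavg_le hp hC₁ (hlow y) hC₂ hhigh hy hn₀ hyn₀ (herr m)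
      (t := lam / 3) (by linarith) (by linarith) b 1 hg0 hg1
    rw [add_thirds, hpsq, Real.div_rpow h0.le zero_le_three, Real.rpow_neg zero_le_three,
      div_inv_eq_mul] at h
    linarith
  · obtain ⟨n, hn, hlt⟩ := hX x hx
    have hn : (2 : ℝ) ^ n₀ < 2 ^ n := by exact_mod_cast hn
    exact ⟨n, ((pow_lt_pow_iff_right₀ one_lt_two).1 hn).le, hlt⟩

theorem weak_type_maximal_estimate :
    ∀ r : ℝ, 1 < r → r < 2 →
      ∃ C : ℝ, 0 < C ∧
        ∀ y : ℕ, 1 ≤ y →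
          ∃ Nry : ℕ,
            ∀ b : ℤ, Int.gcd b y = 1 →
              ∀ F : Finset ℤ, ∀ lam : ℝ, 0 < lam → lam < 1 →
                (∑' x : ℤ,
                    (if ∃ n : ℕ,
                        max ((Nry : ℝ)) ((2 : ℝ) ^ (lam ^ (1 - r))) < (2 : ℝ) ^ n ∧
                        lam < pavg (2 ^ n) y b (fun z => if z ∈ F then (1:ℝ) else 0) x
                      then (1 : ℝ≥0∞) else 0)) ≤
                  ENNReal.ofReal (C * lam ^ (-r - (r - 1) / 4) * (F.card : ℝ)) := by
  intro r hr _
  obtain ⟨C, hC, h⟩ := weak_type_maximal_estimate_general hr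
  refine ⟨C, hC, fun y hy => (h y hy).imp fun Nry hNry b _ F lam h0 h1 => ?_⟩
  have hpow : lam ^ (-r) ≤ lam ^ (-r - (r - 1) / 4) :=
    Real.rpow_le_rpow_of_exponent_ge h0 h1.le (by linarith)
  refine (ENNReal.tsum_le_tsum fun x => ite_one_zero_mono fun ⟨n, hn, hlt⟩ =>
    ⟨n, (le_max_left ..).trans_lt hn, hlt⟩).trans ((hNry b (fun z => if z ∈ F then 1 else 0)
      (fun z => by positivity) (fun z => ite_le_one le_rfl zero_le_one) lam h0 h1).trans ?_)
  rw [tsum_ofReal_ite_mem, ← ENNReal.ofReal_natCast, ← ENNReal.ofReal_mul (by positivity)]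
  gcongr

end
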